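/- arXiv:2406.17089 — 2 statements merged into one kernel-verified Lean document; each statement's English description precedes it below -/
import Mathlib

section
/- Let G be a connected graph of order n and size m. Then its adjacency spectral radius satisfies ρ(G) ≤ √(2m − n + 1), with equality if and only if G = K_n or G = K_{1,n−1}. -/
open SimpleGraph

/-- The (adjacency) spectral radius of a graph: the largest eigenvalue of its
adjacency matrix. -/
noncomputable def graphSpectralRadius {V : Type*} [Fintype V] [DecidableEq V]
    (G : SimpleGraph V) [DecidableRel G.Adj] : ℝ :=
  sSup (spectrum ℝ (G.adjMatrix ℝ))

/-!
Let `A` be the adjacency matrix and `d` the degree function. For every vector `x`, Cauchy–Schwarz in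
each row of `A` gives `‖A x‖² ≤ ∑ v, d v * ∑ w ∼ v, x w ^ 2`, and double counting turns the right
side into `(2m - n + 1) ‖x‖² - ∑ v, (d v - 1) * ∑ w ≁ v, x w ^ 2`, where `w ≁ v` excludes `v`. The
subtracted sum is nonnegative when no vertex is isolated, so every eigenvalue `μ` satisfies
`μ² ≤ 2m - n + 1`.

If equality holds for an eigenvector `x`, then `x` is constant on every neighbourhood, and any
vertex having a non-neighbour in the support of `x` has degree one. When `G` is connected, the first
condition makes `x` nowhere zero, and then the second one leaves only complete graphs and stars.
Conversely, these two families have explicit eigenvectors attaining the bound.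
-/

section CauchySchwarz

open Finset

variable {ι R : Type*} [CommRing R]

theorem sum_sum_sub_sq (s : Finset ι) (f : ι → R) :
    ∑ i ∈ s, ∑ j ∈ s, (f i - f j) ^ 2 = 2 * (#s * ∑ i ∈ s, f i ^ 2 - (∑ i ∈ s, f i) ^ 2) := by
  simp only [sub_sq, sum_add_distrib, sum_sub_distrib, sum_const, nsmul_eq_mul, ← mul_sum,
    ← sum_mul]
  ring

theorem sq_sum_eq_card_mul_sum_sq_iff [LinearOrder R] [IsStrictOrderedRing R] {s : Finset ι}
    {f : ι → R} :
    (∑ i ∈ s, f i) ^ 2 = #s * ∑ i ∈ s, f i ^ 2 ↔ ∀ i ∈ s, ∀ j ∈ s, f i = f j := by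
  have hsum : (∑ i ∈ s, f i) ^ 2 = #s * ∑ i ∈ s, f i ^ 2 ↔
      ∑ i ∈ s, ∑ j ∈ s, (f i - f j) ^ 2 = 0 := by
    rw [sum_sum_sub_sq, mul_eq_zero_iff_left two_ne_zero, sub_eq_zero, eq_comm]
  rw [hsum, sum_eq_zero_iff_of_nonneg fun i _ ↦ sum_nonneg fun j _ ↦ sq_nonneg (f i - f j)]
  refine forall₂_congr fun i _ ↦ ?_
  rw [sum_eq_zero_iff_of_nonneg fun j _ ↦ sq_nonneg (f i - f j)]
  simp only [sq_eq_zero_iff, sub_eq_zero]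

end CauchySchwarz

section NeighborSums

open Finset

variable {V M : Type*} [Fintype V] [AddCommMonoid M] (G : SimpleGraph V)
  [DecidableRel G.Adj]

theorem sum_sum_neighborFinset (f : V → M) :
    ∑ v, ∑ w ∈ G.neighborFinset v, f w = ∑ v, G.degree v • f v := by
  rw [sum_comm' (t' := univ) (s' := fun w ↦ G.neighborFinset w) (by simp [adj_comm])]
  simp only [sum_const, card_neighborFinset_eq_degree]

theorem sum_eq_add_sum_neighborFinset_add_sum_compl [DecidableEq V] (f : V → M) (v : V) :
    ∑ w, f w = f v + ∑ w ∈ G.neighborFinset v, f w + ∑ w ∈ Gᶜ.neighborFinset v, f w := by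
  rw [← sum_add_sum_compl (insert v (G.neighborFinset v)), sum_insert (by simp)]
  congr 2
  ext w
  simp [neighborFinset_compl, and_comm]

theorem sum_degree_mul_sum_neighborFinset_add {R : Type*} [CommRing R] [DecidableEq V]
    (f : V → R) :
    ∑ v, G.degree v * ∑ w ∈ G.neighborFinset v, f w +
        ∑ v, (G.degree v - 1) * ∑ w ∈ Gᶜ.neighborFinset v, f w =
      (2 * #G.edgeFinset - Fintype.card V + 1) * ∑ v, f v := by
  have hcompl (v : V) : ∑ w ∈ Gᶜ.neighborFinset v, f w =
      ∑ w, f w - f v - ∑ w ∈ G.neighborFinset v, f w := by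
    rw [sum_eq_add_sum_neighborFinset_add_sum_compl G f v]
    ring
  have hdegree : ∑ v, (G.degree v : R) = 2 * #G.edgeFinset := by
    exact_mod_cast congrArg (Nat.cast (R := R)) G.sum_degrees_eq_twice_card_edges
  have hneighbor : ∑ v, ∑ w ∈ G.neighborFinset v, f w = ∑ v, G.degree v * f v := by
    simp only [sum_sum_neighborFinset, nsmul_eq_mul]
  simp only [hcompl, mul_sub, sub_mul, one_mul, sum_sub_distrib, ← sum_mul, hdegree, hneighbor,
    sum_const, card_univ, nsmul_eq_mul]
  ring

end NeighborSums

section HongInequality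

open Finset Matrix

variable {V R : Type*} [Fintype V] [CommRing R] [LinearOrder R]
  [IsStrictOrderedRing R] {G : SimpleGraph V} [DecidableRel G.Adj]

theorem sq_adjMatrix_mulVec_apply_le (x : V → R) (v : V) :
    (G.adjMatrix R *ᵥ x) v ^ 2 ≤ G.degree v * ∑ w ∈ G.neighborFinset v, x w ^ 2 := by
  rw [adjMatrix_mulVec_apply, ← card_neighborFinset_eq_degree]
  exact sq_sum_le_card_mul_sum_sq

theorem sq_adjMatrix_mulVec_apply_eq_iff {x : V → R} {v : V} :
    (G.adjMatrix R *ᵥ x) v ^ 2 = G.degree v * ∑ w ∈ G.neighborFinset v, x w ^ 2 ↔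
      ∀ u w, G.Adj v u → G.Adj v w → x u = x w := by
  rw [adjMatrix_mulVec_apply, ← card_neighborFinset_eq_degree, sq_sum_eq_card_mul_sum_sq_iff]
  simp only [mem_neighborFinset]
  exact ⟨fun h u w hu hw ↦ h u hu w hw, fun h u hu w hw ↦ h u w hu hw⟩

theorem degree_sub_one_mul_sum_compl_nonneg [DecidableEq V]
    (hdeg : Nontrivial V → ∀ v, 0 < G.degree v) (x : V → R) (v : V) :
    0 ≤ ((G.degree v : R) - 1) * ∑ w ∈ Gᶜ.neighborFinset v, x w ^ 2 := by
  cases subsingleton_or_nontrivial V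
  · simp [IsIsolated.of_subsingleton]
  · have : (1 : R) ≤ G.degree v := by exact_mod_cast hdeg ‹_› v
    exact mul_nonneg (sub_nonneg.2 this) (sum_nonneg fun w _ ↦ sq_nonneg (x w))

theorem degree_sub_one_mul_sum_compl_eq_zero_iff [DecidableEq V] {x : V → R} {v : V} :
    ((G.degree v : R) - 1) * ∑ w ∈ Gᶜ.neighborFinset v, x w ^ 2 = 0 ↔
      ∀ w, Gᶜ.Adj v w → x w ≠ 0 → G.degree v = 1 := by
  rw [mul_eq_zero, sub_eq_zero, Nat.cast_eq_one,
    sum_eq_zero_iff_of_nonneg fun w _ ↦ sq_nonneg (x w)]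
  simp only [mem_neighborFinset, sq_eq_zero_iff]
  grind

theorem sum_sq_adjMatrix_mulVec_le (hdeg : Nontrivial V → ∀ v, 0 < G.degree v) (x : V → R) :
    ∑ v, (G.adjMatrix R *ᵥ x) v ^ 2 ≤
      (2 * #G.edgeFinset - Fintype.card V + 1) * ∑ v, x v ^ 2 := by
  classical
  rw [← sum_degree_mul_sum_neighborFinset_add]
  exact (sum_le_sum fun v _ ↦ sq_adjMatrix_mulVec_apply_le x v).trans <|
    le_add_of_nonneg_right <| sum_nonneg fun v _ ↦ degree_sub_one_mul_sum_compl_nonneg hdeg x v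

theorem sum_sq_adjMatrix_mulVec_eq_iff (hdeg : Nontrivial V → ∀ v, 0 < G.degree v) {x : V → R} :
    ∑ v, (G.adjMatrix R *ᵥ x) v ^ 2 = (2 * #G.edgeFinset - Fintype.card V + 1) * ∑ v, x v ^ 2 ↔
      (∀ v u w, G.Adj v u → G.Adj v w → x u = x w) ∧
        ∀ v w, Gᶜ.Adj v w → x w ≠ 0 → G.degree v = 1 := by
  classical
  have hrow (v : V) (_ : v ∈ univ) := sq_adjMatrix_mulVec_apply_le (G := G) x v
  have hcompl (v : V) (_ : v ∈ univ) := degree_sub_one_mul_sum_compl_nonneg hdeg x v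
  simp only [← sum_degree_mul_sum_neighborFinset_add, ← sq_adjMatrix_mulVec_apply_eq_iff,
    ← degree_sub_one_mul_sum_compl_eq_zero_iff]
  have hrow_eq := sum_eq_sum_iff_of_le hrow
  have hcompl_eq := sum_eq_zero_iff_of_nonneg hcompl
  simp only [mem_univ, true_imp_iff] at hrow_eq hcompl_eq
  rw [← hrow_eq, ← hcompl_eq]
  have := sum_le_sum hrow
  have := sum_nonneg hcompl
  constructor
  · intro h
    constructor <;> linarith
  · rintro ⟨h₁, h₂⟩
    rw [h₁, h₂, add_zero]

end HongInequality

section Star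

variable {V W : Type*} {G : SimpleGraph V}

theorem reachable_induction {u v : V} {p : V → Prop} (h : G.Reachable u v) (hu : p u)
    (hadj : ∀ a b, G.Adj a b → p a → p b) : p v := by
  obtain ⟨w⟩ := h
  induction w with
  | nil => exact hu
  | cons hab _ ih => exact ih (hadj _ _ hab hu)

theorem eq_top_or_exists_eq_starGraph (hconn : G.Preconnected)
    (huniq : ∀ u v, Gᶜ.Adj u v → ∃! w, G.Adj u w) : G = ⊤ ∨ ∃ c, G = starGraph c := by
  refine or_iff_not_imp_left.2 fun hG ↦ ?_
  obtain ⟨u, v, huv⟩ := Gᶜ.ne_bot_iff_exists_adj.1 (by rwa [ne_eq, compl_eq_bot])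
  obtain ⟨c, huc, hu⟩ := huniq u v huv
  have huniversal : G.IsUniversal c := by
    intro w hcw
    by_contra hcw_adj
    have hc {a b : V} (ha : G.Adj c a) (hb : G.Adj c b) : a = b :=
      (huniq c w ⟨hcw, hcw_adj⟩).unique ha hb
    have hw : w = u ∨ w = c := by
      refine reachable_induction (p := fun a ↦ a = u ∨ a = c) (hconn u w) (Or.inl rfl) ?_
      rintro a b hab (rfl | rfl)
      · exact Or.inr (hu b hab)
      · exact Or.inl (hc hab huc.symm)
    rcases hw with rfl | rfl
    · exact hcw_adj huc.symm
    · exact hcw rfl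
  have heq_center {a b : V} (hab : G.Adj a b) (ha : a ≠ c) : b = c := by
    rcases eq_or_ne a u with rfl | hau
    · exact hu b hab
    · exact (huniq a u ⟨hau, fun h ↦ ha (hu a h.symm)⟩).unique hab (huniversal ha.symm).symm
  refine ⟨c, ?_⟩
  ext a b
  rw [starGraph_adj]
  constructor
  · exact fun hab ↦ ⟨hab.ne, or_iff_not_imp_left.2 (heq_center hab)⟩
  · rintro ⟨hab, rfl | rfl⟩
    · exact huniversal hab
    · exact (huniversal hab.symm).symm

theorem completeBipartiteGraph_eq_starGraph [Unique V] :
    completeBipartiteGraph V W = starGraph (Sum.inl default) := by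
  ext (a | a) (b | b) <;> simp [Subsingleton.elim _ (default : V)]

theorem nonempty_iso_starGraph_iff (e : V ≃ W) {r : W} :
    Nonempty (G ≃g starGraph r) ↔ ∃ c, G = starGraph c := by
  classical
  constructor
  · rintro ⟨f⟩
    refine ⟨f.symm r, ?_⟩
    ext u v
    simp [← f.map_adj_iff, f.eq_symm_apply]
  · rintro ⟨c, rfl⟩
    let f := e.trans (Equiv.swap (e c) r)
    have hf : f c = r := by simp [f]
    exact ⟨f, by simp [← hf]⟩

theorem nonempty_iso_completeBipartiteGraph_fin_one_iff [Fintype V] [Nonempty V] :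
    Nonempty (G ≃g completeBipartiteGraph (Fin 1) (Fin (Fintype.card V - 1))) ↔
      ∃ c, G = starGraph c := by
  have hcard : Fintype.card V = Fintype.card (Fin 1 ⊕ Fin (Fintype.card V - 1)) := by
    simp [Nat.add_sub_cancel' Fintype.card_pos]
  rw [completeBipartiteGraph_eq_starGraph]
  exact nonempty_iso_starGraph_iff (Fintype.equivOfCardEq hcard)

end Star

section EdgeCount

open Finset

variable {V R : Type*} [Fintype V]

theorem two_mul_card_edgeFinset_top_sub_card_add_one [Field R] [CharZero R]
    [DecidableRel (⊤ : SimpleGraph V).Adj] :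
    2 * (#(⊤ : SimpleGraph V).edgeFinset : R) - Fintype.card V + 1 = (Fintype.card V - 1) ^ 2 := by
  classical
  have hchoose : #(⊤ : SimpleGraph V).edgeFinset = (Fintype.card V).choose 2 := by
    convert card_edgeFinset_top_eq_card_choose_two (V := V)
  rw [hchoose, Nat.cast_choose_two]
  ring

theorem two_mul_card_edgeFinset_starGraph_sub_card_add_one [CommRing R] (c : V)
    [DecidableRel (starGraph c).Adj] :
    2 * (#(starGraph c).edgeFinset : R) - Fintype.card V + 1 = Fintype.card V - 1 := by
  rw [← (isTree_starGraph c).card_edgeFinset]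
  push_cast
  ring

end EdgeCount

section Eigenvectors

open Finset Matrix

variable {V R : Type*} [Fintype V] {G : SimpleGraph V} [DecidableRel G.Adj] {x : V → R} {μ : R}

theorem eigenvector_apply_ne_zero_of_const_on_neighbors [Semiring R] [NoZeroDivisors R]
    [CharZero R] (hconn : G.Preconnected) (hx₀ : x ≠ 0) (hx : G.adjMatrix R *ᵥ x = μ • x)
    (hconst : ∀ v u w, G.Adj v u → G.Adj v w → x u = x w) (v : V) : x v ≠ 0 := by
  have hzero {v w : V} (hvw : G.Adj v w) (hv : x v = 0) : x w = 0 := by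
    have hmul : G.degree v * x w = μ * x v :=
      calc G.degree v * x w = ∑ u ∈ G.neighborFinset v, x u := by
            rw [sum_congr rfl fun u hu ↦ hconst v u w ((G.mem_neighborFinset v u).1 hu) hvw,
              sum_const, card_neighborFinset_eq_degree, nsmul_eq_mul]
        _ = μ * x v := by rw [← adjMatrix_mulVec_apply, hx, Pi.smul_apply, smul_eq_mul]
    have hdeg : (G.degree v : R) ≠ 0 := by
      exact_mod_cast ((G.degree_pos_iff_exists_adj v).2 ⟨w, hvw⟩).ne'
    simpa [hv, hdeg] using hmul
  intro hv
  exact hx₀ <| funext fun w ↦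
    reachable_induction (p := fun w ↦ x w = 0) (hconn v w) hv fun _ _ ↦ hzero

variable [CommRing R] [LinearOrder R] [IsStrictOrderedRing R]

theorem sq_adjMatrix_eigenvalue_le (hdeg : Nontrivial V → ∀ v, 0 < G.degree v) (hx₀ : x ≠ 0)
    (hx : G.adjMatrix R *ᵥ x = μ • x) : μ ^ 2 ≤ 2 * #G.edgeFinset - Fintype.card V + 1 := by
  obtain ⟨v, hv⟩ := Function.ne_iff.1 hx₀
  have hpos : 0 < ∑ v, x v ^ 2 :=
    sum_pos' (fun v _ ↦ sq_nonneg (x v)) ⟨v, mem_univ v, sq_pos_of_ne_zero hv⟩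
  refine le_of_mul_le_mul_right ?_ hpos
  simpa only [hx, Pi.smul_apply, smul_eq_mul, mul_pow, ← mul_sum] using
    sum_sq_adjMatrix_mulVec_le hdeg x

theorem eq_top_or_exists_eq_starGraph_of_sq_eigenvalue_eq (hconn : G.Preconnected) (hx₀ : x ≠ 0)
    (hx : G.adjMatrix R *ᵥ x = μ • x) (hμ : μ ^ 2 = 2 * #G.edgeFinset - Fintype.card V + 1) :
    G = ⊤ ∨ ∃ c, G = starGraph c := by
  have hnorm : ∑ v, (G.adjMatrix R *ᵥ x) v ^ 2 =
      (2 * #G.edgeFinset - Fintype.card V + 1) * ∑ v, x v ^ 2 := by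
    simp only [hx, Pi.smul_apply, smul_eq_mul, mul_pow, ← mul_sum, hμ]
  obtain ⟨hconst, hdegree⟩ :=
    (sum_sq_adjMatrix_mulVec_eq_iff fun _ v ↦ hconn.degree_pos_of_nontrivial v).1 hnorm
  have hsupp := eigenvector_apply_ne_zero_of_const_on_neighbors hconn hx₀ hx hconst
  exact eq_top_or_exists_eq_starGraph hconn fun v w hvw ↦
    degree_eq_one_iff_existsUnique_adj.1 (hdegree v w hvw (hsupp w))

end Eigenvectors

section SpectralRadius

open Finset Matrix

theorem mem_spectrum_iff_exists_mulVec_eq_smul {n K : Type*} [Fintype n] [DecidableEq n] [Field K]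
    {A : Matrix n n K} {μ : K} : μ ∈ spectrum K A ↔ ∃ x ≠ 0, A *ᵥ x = μ • x := by
  rw [← spectrum_toLin', ← Module.End.hasEigenvalue_iff_mem_spectrum]
  constructor
  · intro h
    obtain ⟨x, hx⟩ := h.exists_hasEigenvector
    exact ⟨x, hx.2, hx.apply_eq_smul⟩
  · rintro ⟨x, hx₀, hx⟩
    exact Module.End.hasEigenvalue_of_hasEigenvector ⟨Module.End.mem_eigenspace_iff.2 hx, hx₀⟩

variable {V : Type*} [Fintype V] [DecidableEq V] {G : SimpleGraph V} [DecidableRel G.Adj]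

theorem le_graphSpectralRadius {x : V → ℝ} {μ : ℝ} (hx₀ : x ≠ 0)
    (hx : G.adjMatrix ℝ *ᵥ x = μ • x) : μ ≤ graphSpectralRadius G :=
  le_csSup finite_real_spectrum.bddAbove (mem_spectrum_iff_exists_mulVec_eq_smul.2 ⟨x, hx₀, hx⟩)

theorem exists_mulVec_eq_graphSpectralRadius_smul [Nonempty V] (G : SimpleGraph V)
    [DecidableRel G.Adj] : ∃ x ≠ 0, G.adjMatrix ℝ *ᵥ x = graphSpectralRadius G • x := by
  have hA : (G.adjMatrix ℝ).IsHermitian := G.isHermitian_adjMatrix ℝ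
  have hne : (spectrum ℝ (G.adjMatrix ℝ)).Nonempty :=
    ⟨_, hA.eigenvalues_mem_spectrum_real (Classical.arbitrary V)⟩
  exact mem_spectrum_iff_exists_mulVec_eq_smul.1 (hne.csSup_mem finite_real_spectrum)

theorem natCast_le_graphSpectralRadius_of_isRegularOfDegree [Nonempty V] {d : ℕ}
    (hG : G.IsRegularOfDegree d) : (d : ℝ) ≤ graphSpectralRadius G := by
  refine le_graphSpectralRadius (x := Function.const V 1) (by simp) ?_
  ext v
  simp [hG v]

theorem sqrt_le_graphSpectralRadius_starGraph (c : V) [DecidableRel (starGraph c).Adj] :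
    √(Fintype.card V - 1) ≤ graphSpectralRadius (starGraph c) := by
  have hcard : ((Fintype.card V - 1 : ℕ) : ℝ) = Fintype.card V - 1 :=
    Nat.cast_pred (Fintype.card_pos_iff.2 ⟨c⟩)
  -- With value `1` at the center the vector is nonzero even for `card V = 1`, where `(√0)⁻¹ = 0`.
  refine le_graphSpectralRadius (x := fun v ↦ if v = c then 1 else (√(Fintype.card V - 1))⁻¹)
    (fun h ↦ by simpa using congrFun h c) ?_
  ext v
  rw [adjMatrix_mulVec_apply]
  rcases eq_or_ne v c with rfl | hv
  · have hconst : ∀ w ∈ (starGraph v).neighborFinset v,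
        (if w = v then 1 else (√(Fintype.card V - 1))⁻¹) = (√(Fintype.card V - 1))⁻¹ :=
      fun w hw ↦ if_neg (Adj.ne' ((mem_neighborFinset _ _ _).1 hw))
    have hdegree : (starGraph v).degree v = Fintype.card V - 1 := by simp
    rw [sum_congr rfl hconst, sum_const, card_neighborFinset_eq_degree, hdegree, nsmul_eq_mul,
      hcard, ← div_eq_mul_inv, Real.div_sqrt]
    simp
  · have hneighbor : (starGraph c).neighborFinset v = {c} := by
      ext w
      simp only [mem_neighborFinset, starGraph_adj, mem_singleton]
      grind
    have hpos : (0 : ℝ) < Fintype.card V - 1 := by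
      have := Fintype.one_lt_card_iff.2 ⟨v, c, hv⟩
      exact sub_pos.2 (by exact_mod_cast this)
    simp [hneighbor, hv, mul_inv_cancel₀ (Real.sqrt_pos.2 hpos).ne']

theorem sqrt_le_graphSpectralRadius [Nonempty V] (hG : G = ⊤ ∨ ∃ c, G = starGraph c) :
    √(2 * #G.edgeFinset - Fintype.card V + 1) ≤ graphSpectralRadius G := by
  rcases hG with rfl | ⟨c, rfl⟩
  · rw [two_mul_card_edgeFinset_top_sub_card_add_one, ← Nat.cast_pred Fintype.card_pos,
      Real.sqrt_sq (Nat.cast_nonneg _)]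
    exact natCast_le_graphSpectralRadius_of_isRegularOfDegree fun v ↦ by simp
  · rw [two_mul_card_edgeFinset_starGraph_sub_card_add_one]
    exact sqrt_le_graphSpectralRadius_starGraph c

end SpectralRadius

/-- For a connected graph of order `n` and size `m`,
`ρ(G) ≤ √(2m − n + 1)`, with equality iff `G = K_n` or `G ≅ K_{1,n−1}`. -/
theorem graphSpectralRadius_le {V : Type*} [Fintype V] [DecidableEq V]
    (G : SimpleGraph V) [DecidableRel G.Adj] (n m : ℕ)
    (hn : n = Fintype.card V) (hm : m = G.edgeFinset.card)
    (hconn : G.Connected) :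
    graphSpectralRadius G ≤ Real.sqrt (2 * m - n + 1) ∧
      (graphSpectralRadius G = Real.sqrt (2 * m - n + 1) ↔
        G = ⊤ ∨ Nonempty (G ≃g completeBipartiteGraph (Fin 1) (Fin (n - 1)))) := by
  subst hn hm
  have := hconn.nonempty
  obtain ⟨x, hx₀, hx⟩ := exists_mulVec_eq_graphSpectralRadius_smul G
  have hsq :=
    sq_adjMatrix_eigenvalue_le (fun _ v ↦ hconn.preconnected.degree_pos_of_nontrivial v) hx₀ hx
  have hle := Real.le_sqrt_of_sq_le hsq
  rw [nonempty_iso_completeBipartiteGraph_fin_one_iff]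
  refine ⟨hle, fun heq ↦ ?_, fun hG ↦ hle.antisymm (sqrt_le_graphSpectralRadius hG)⟩
  refine eq_top_or_exists_eq_starGraph_of_sq_eigenvalue_eq hconn.preconnected hx₀ hx ?_
  rw [heq, Real.sq_sqrt ((sq_nonneg _).trans hsq)]
end

section
/- Let G be a simple connected t-tough graph of order n and size m with t ∈ {1, 2, 3}, where (t = 1 and n ≥ 7) or (t = 2 and n ≥ 16) or (t = 3 and n ≥ 28). If m ≥ C(n − 2t, 2) + 3t², then G is pancyclic or bipartite. -/
open SimpleGraph

noncomputable def numComponents {V : Type*} (G : SimpleGraph V) (S : Finset V) : ℕ :=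
  Nat.card (G.induce ((↑S : Set V)ᶜ)).ConnectedComponent

def IsTough {V : Type*} (t : ℝ) (G : SimpleGraph V) : Prop :=
  ∀ S : Finset V, 2 ≤ numComponents G S →
    t * (numComponents G S : ℝ) ≤ (S.card : ℝ)

/-- A graph of order `n` is pancyclic if it has a cycle of every length `ℓ`
with `3 ≤ ℓ ≤ n`. -/
def Pancyclic {V : Type*} [Fintype V] (G : SimpleGraph V) : Prop :=
  ∀ ℓ : ℕ, 3 ≤ ℓ → ℓ ≤ Fintype.card V →
    ∃ (v : V) (c : G.Walk v v), c.IsCycle ∧ c.length = ℓ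

/-!
Suppose `G` is not Hamiltonian, and add edges as long as this remains so. In the resulting graph a
nonadjacent pair `u`, `v` of maximal degree sum is joined by a Hamiltonian path `p 0, …, p N`.
As there is no Hamiltonian cycle, every index `k` with `p k ∈ N(v)` and `p (k + 2) ∈ N(u)` gives
a cycle that bypasses only `w = p (k + 1)`; the successors on this cycle of the neighbours of `w`,
together with `w`, form an independent set, so toughness bounds `deg w` from above. There are at
least `|N(u) ∩ N(v)| - (n - deg u - deg v)` such vertices `w`. For every other vertex the choice of
`u`, `v` bounds the degree by `deg u`, `deg v` or `n - 1`, and the resulting degree sum is too small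
for the assumed number of edges. So `G` is Hamiltonian, and it has more than `n² / 4` edges, hence
is pancyclic by Bondy's theorem.
-/

open Finset

section Paths

variable {V : Type*} [DecidableEq V] {G : SimpleGraph V} {a b c d u v w : V} {s s' : Finset V}

/-- `G` has a path from `a` to `b` whose vertex set is exactly `s`. Paths are glued and closed to
cycles at this level, where only the vertex sets matter. -/
def HasPathOn (G : SimpleGraph V) (a b : V) (s : Finset V) : Prop :=
  ∃ w : G.Walk a b, w.IsPath ∧ w.support.toFinset = s

theorem HasPathOn.singleton (a : V) : HasPathOn G a a {a} :=
  ⟨Walk.nil, by simp, by simp⟩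

theorem HasPathOn.symm (h : HasPathOn G a b s) : HasPathOn G b a s := by
  obtain ⟨w, hw, hs⟩ := h
  exact ⟨w.reverse, hw.reverse, by simp [hs]⟩

theorem HasPathOn.join (h : HasPathOn G a b s) (hbc : G.Adj b c) (h' : HasPathOn G c d s')
    (hd : Disjoint s s') : HasPathOn G a d (s ∪ s') := by
  obtain ⟨w, hw, rfl⟩ := h
  obtain ⟨w', hw', rfl⟩ := h'
  have hsupp : (w.append (Walk.cons hbc w')).support = w.support ++ w'.support := by
    simp [Walk.support_append]
  refine ⟨w.append (Walk.cons hbc w'), ?_, by rw [hsupp, List.toFinset_append]⟩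
  rw [Walk.isPath_def, hsupp, List.nodup_append']
  exact ⟨hw.support_nodup, hw'.support_nodup, List.disjoint_toFinset_iff_disjoint.mp hd⟩

theorem HasPathOn.exists_isCycle (h : HasPathOn G a b s) (hab : G.Adj a b) (hs : 3 ≤ #s) :
    ∃ (x : V) (c : G.Walk x x), c.IsCycle ∧ c.length = #s := by
  obtain ⟨w, hw, rfl⟩ := h
  rw [List.toFinset_card_of_nodup hw.support_nodup, Walk.length_support] at hs ⊢
  refine ⟨b, Walk.cons hab.symm w, (Walk.cons_isCycle_iff w hab.symm).mpr ⟨hw, fun hmem ↦ ?_⟩, rfl⟩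
  have := hw.length_eq_one_of_mem_edges (Sym2.eq_swap ▸ hmem)
  omega

theorem HasPathOn.isHamiltonian [Fintype V] (h : HasPathOn G a b univ) (hab : G.Adj a b)
    (hV : 3 ≤ Fintype.card V) : G.IsHamiltonian := fun _ ↦ by
  obtain ⟨x, c, hc, hlen⟩ := h.exists_isCycle hab (by rwa [card_univ])
  exact ⟨x, c, Walk.isHamiltonianCycle_iff_isCycle_and_length_eq.mpr ⟨hc, by rw [hlen, card_univ]⟩⟩

end Paths

section IndexedPaths

variable {V : Type*} {G : SimpleGraph V} {p : ℕ → V} {N i j k l : ℕ}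

/-- `p 0, …, p N` are the successive vertices of a path of `G`. The values of `p` beyond `N` are
irrelevant. -/
structure IsIndexedPath (G : SimpleGraph V) (p : ℕ → V) (N : ℕ) : Prop where
  adj : ∀ k < N, G.Adj (p k) (p (k + 1))
  injOn : Set.InjOn p (Set.Iic N)

/-- `p 0, …, p N` is a Hamiltonian path of `G`. -/
structure IsSpanningPath (G : SimpleGraph V) (p : ℕ → V) (N : ℕ) : Prop
    extends IsIndexedPath G p N where
  surj : ∀ x, ∃ k ≤ N, p k = x

/-- `c 0, c 1, …` are the successive vertices of a closed walk of `G` without repetitions, that is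
of a cycle of length `m` as soon as `3 ≤ m`. -/
structure IsIndexedCycle {m : ℕ} (G : SimpleGraph V) (c : ZMod m → V) : Prop where
  adj : ∀ i, G.Adj (c i) (c (i + 1))
  injective : Function.Injective c

theorem IsIndexedPath.ne (hp : IsIndexedPath G p N) (hi : i ≤ N) (hj : j ≤ N) (hij : i ≠ j) :
    p i ≠ p j :=
  fun h ↦ hij (hp.injOn hi hj h)

theorem IsIndexedPath.of_isPath {a b : V} {w : G.Walk a b} (hw : w.IsPath) :
    IsIndexedPath G w.getVert w.length :=
  ⟨fun _ hk ↦ w.adj_getVert_succ hk, hw.getVert_injOn⟩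

theorem IsIndexedPath.isIndexedCycle (hp : IsIndexedPath G p N) (h : G.Adj (p N) (p 0)) :
    IsIndexedCycle G fun i : ZMod (N + 1) ↦ p i.val := by
  have val_le (i : ZMod (N + 1)) : i.val ≤ N := Nat.lt_succ_iff.mp i.val_lt
  refine ⟨fun i ↦ ?_, fun i i' hii' ↦ ZMod.val_injective _ (hp.injOn (val_le i) (val_le i') hii')⟩
  have val_succ : (i + 1).val = (i.val + 1) % (N + 1) := by
    rw [ZMod.val_add, ZMod.val_one_eq_one_mod, Nat.add_mod_mod]
  rcases (val_le i).lt_or_eq with hi | hi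
  · simpa only [val_succ, Nat.mod_eq_of_lt (Nat.succ_lt_succ hi)] using hp.adj i.val hi
  · simpa only [val_succ, hi, Nat.mod_self] using h

theorem IsIndexedCycle.isIndexedPath {c : ZMod (N + 1) → V} (hc : IsIndexedCycle G c)
    (a : ZMod (N + 1)) : IsIndexedPath G (fun k ↦ c (a + k)) N where
  adj k _ := by simpa only [Nat.cast_succ, add_assoc] using hc.adj (a + k)
  injOn k hk l hl hkl := by
    have h := congrArg ZMod.val (add_left_cancel (hc.injective hkl))
    rwa [ZMod.val_cast_of_lt (Nat.lt_succ_of_le hk), ZMod.val_cast_of_lt (Nat.lt_succ_of_le hl)]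
      at h

theorem natCast_add_one_eq_neg_one (N : ℕ) : (N : ZMod (N + 1)) = -1 :=
  eq_neg_of_add_eq_zero_left (by exact_mod_cast ZMod.natCast_self (N + 1))

theorem IsIndexedCycle.isSpanningPath {c : ZMod (N + 1) → V} (hc : IsIndexedCycle G c)
    (hsurj : c.Surjective) (a : ZMod (N + 1)) : IsSpanningPath G (fun k ↦ c (a + k)) N where
  toIsIndexedPath := hc.isIndexedPath a
  surj x := by
    obtain ⟨i, rfl⟩ := hsurj x
    exact ⟨(i - a).val, Nat.lt_succ_iff.mp (ZMod.val_lt _), by simp⟩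

theorem IsSpanningPath.reverse (hp : IsSpanningPath G p N) :
    IsSpanningPath G (fun k ↦ p (N - k)) N where
  adj k hk := by
    have h := (hp.adj (N - (k + 1)) (by omega)).symm
    rwa [show N - (k + 1) + 1 = N - k by omega] at h
  injOn k hk l hl hkl := by
    have := hp.injOn (Nat.sub_le N k) (Nat.sub_le N l) hkl
    simp only [Set.mem_Iic] at hk hl
    omega
  surj x := by
    obtain ⟨k, hk, rfl⟩ := hp.surj x
    exact ⟨N - k, Nat.sub_le N k, by rw [Nat.sub_sub_self hk]⟩

theorem IsSpanningPath.of_sup_edge {u v : V} (hp : IsSpanningPath (G ⊔ edge u v) p N)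
    (hN : 2 ≤ N) (hends : s(p N, p 0) = s(u, v)) :
    IsSpanningPath G p N where
  adj k hk := by
    refine (hp.adj k hk).resolve_right fun h ↦ ?_
    rw [adj_edge, ← hends, Sym2.eq_iff] at h
    rcases h.1 with ⟨h₁, -⟩ | ⟨h₁, h₂⟩
    · exact hp.ne le_rfl hk.le (by omega) h₁
    · have hkN : N = k + 1 := hp.injOn (Set.mem_Iic.mpr le_rfl) (Set.mem_Iic.mpr hk) h₁
      exact hp.ne (Nat.zero_le N) hk.le (by omega) h₂
  injOn := hp.injOn
  surj := hp.surj

section VertexSets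

variable [DecidableEq V]

theorem IsIndexedPath.hasPathOn (hp : IsIndexedPath G p N) (hij : i ≤ j) (hj : j ≤ N) :
    HasPathOn G (p i) (p j) ((Icc i j).image p) := by
  induction j, hij using Nat.le_induction with
  | base => simpa using HasPathOn.singleton (G := G) (p i)
  | succ j hij ih =>
    have hnotMem : p (j + 1) ∉ (Icc i j).image p := by
      simp only [mem_image, mem_Icc, not_exists, not_and]
      exact fun k hk ↦ hp.ne (by omega) hj (by omega)
    rw [← insert_Icc_right_eq_Icc_add_one (by omega), image_insert, insert_eq, union_comm]
    exact (ih (by omega)).join (hp.adj j (by omega)) (.singleton _)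
      (disjoint_singleton_right.mpr hnotMem)

theorem IsIndexedPath.disjoint_image (hp : IsIndexedPath G p N) (hj : j ≤ N) (hl : l ≤ N)
    (h : j < k ∨ l < i) : Disjoint ((Icc i j).image p) ((Icc k l).image p) := by
  simp only [Finset.disjoint_left, mem_image, mem_Icc, not_exists, not_and, forall_exists_index,
    and_imp]
  rintro _ x hix hxj rfl y hky hyl
  exact hp.ne (by omega) (by omega) (by omega)

theorem IsIndexedPath.card_image (hp : IsIndexedPath G p N) {s : Finset ℕ} (hs : ∀ k ∈ s, k ≤ N) :
    #(s.image p) = #s :=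
  card_image_of_injOn (hp.injOn.mono hs)

theorem IsSpanningPath.hasPathOn_univ [Fintype V] (hp : IsSpanningPath G p N) :
    HasPathOn G (p 0) (p N) univ := by
  convert hp.hasPathOn (Nat.zero_le N) le_rfl using 1
  refine (eq_univ_of_forall fun x ↦ ?_).symm
  obtain ⟨k, hk, rfl⟩ := hp.surj x
  exact mem_image_of_mem p (by simpa using hk)

end VertexSets

theorem IsSpanningPath.card_eq [Fintype V] (hp : IsSpanningPath G p N) :
    Fintype.card V = N + 1 := by
  classical
  have huniv : (range (N + 1)).image p = univ := eq_univ_of_forall fun x ↦ by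
    obtain ⟨k, hk, rfl⟩ := hp.surj x
    exact mem_image_of_mem p (by simpa [Nat.lt_succ_iff] using hk)
  rw [← card_univ, ← huniv, hp.card_image (by simp), card_range]

theorem IsSpanningPath.card_filter [Fintype V] (hp : IsSpanningPath G p N) (P : V → Prop)
    [DecidablePred P] : #{x | P x} = #{k ∈ range (N + 1) | P (p k)} := by
  classical
  rw [← hp.card_image (s := {k ∈ range (N + 1) | P (p k)}) (by simp +contextual)]
  congr 1
  ext x
  obtain ⟨k, hk, rfl⟩ := hp.surj x
  grind

theorem IsSpanningPath.degree_eq [Fintype V] [DecidableRel G.Adj] (hp : IsSpanningPath G p N)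
    (x : V) : G.degree x = #{k ∈ range (N + 1) | G.Adj x (p k)} := by
  classical
  rw [← card_neighborFinset_eq_degree, neighborFinset_eq_filter, hp.card_filter]

theorem IsSpanningPath.not_adj [DecidableEq V] [Fintype V] (hp : IsSpanningPath G p N)
    (hN : 2 ≤ N) (hG : ¬ G.IsHamiltonian) : ¬ G.Adj (p 0) (p N) :=
  fun h ↦ hG (hp.hasPathOn_univ.isHamiltonian h (by rw [hp.card_eq]; omega))

end IndexedPaths

section HamiltonianCycles

variable {V : Type*} [DecidableEq V] [Fintype V] {G : SimpleGraph V}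

theorem exists_isIndexedCycle_of_isHamiltonian [Nontrivial V] (hG : G.IsHamiltonian) :
    ∃ (N : ℕ) (c : ZMod (N + 1) → V), IsIndexedCycle G c ∧ c.Surjective := by
  obtain ⟨a, p, hp⟩ := hG Fintype.one_lt_card.ne'
  cases p with
  | nil => exact absurd rfl hp.isCycle.ne_nil
  | cons h q =>
    have hq : q.IsHamiltonian := by
      have hcycle := hp.isCycle
      have hlen := hp.length_eq
      rw [Walk.cons_isCycle_iff] at hcycle
      rw [Walk.length_cons] at hlen
      exact Walk.isHamiltonian_iff_isPath_and_length_eq.mpr ⟨hcycle.1, by omega⟩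
    refine ⟨q.length, _, (IsIndexedPath.of_isPath hq.isPath).isIndexedCycle (by simpa using h),
      fun x ↦ ?_⟩
    obtain ⟨k, rfl, hk⟩ := Walk.mem_support_iff_exists_getVert.mp (hq.mem_support x)
    exact ⟨k, by rw [ZMod.val_cast_of_lt (Nat.lt_succ_of_le hk)]⟩

theorem exists_isSpanningPath_of_isHamiltonian_sup_edge {u v : V} (huv : u ≠ v)
    (hG : ¬ G.IsHamiltonian) (hH : (G ⊔ edge u v).IsHamiltonian) :
    ∃ (N : ℕ) (p : ℕ → V), 2 ≤ N ∧ IsSpanningPath G p N ∧ p 0 = u ∧ p N = v := by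
  have : Nontrivial V := ⟨u, v, huv⟩
  obtain ⟨N, c, hc, hsurj⟩ := exists_isIndexedCycle_of_isHamiltonian hH
  have hN : 2 ≤ N := by
    have := (hc.isSpanningPath hsurj 0).card_eq
    have := Fintype.one_lt_card (α := V)
    have : Fintype.card V ≠ 2 := fun h ↦ not_isHamiltonian_of_card_eq_two h hH
    omega
  by_cases hall : ∀ i, G.Adj (c i) (c (i + 1))
  · refine absurd ?_ ((IsIndexedCycle.isSpanningPath ⟨hall, hc.injective⟩ hsurj 0).not_adj hN hG)
    simpa [natCast_add_one_eq_neg_one] using (hall (-1)).symm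
  obtain ⟨i, hi⟩ := not_forall.mp hall
  have hedge : s(c i, c (i + 1)) = s(u, v) :=
    ((adj_edge ..).mp ((hc.adj i).resolve_left hi)).1.symm
  have hlast : i + 1 + N = i := by rw [natCast_add_one_eq_neg_one]; ring
  have hp : IsSpanningPath G (fun k ↦ c (i + 1 + k)) N :=
    (hc.isSpanningPath hsurj (i + 1)).of_sup_edge hN (by simpa [hlast] using hedge)
  rcases Sym2.eq_iff.mp hedge with ⟨hu, hv⟩ | ⟨hv, hu⟩
  · exact ⟨N, _, hN, hp.reverse, by simpa [hlast] using hu, by simpa using hv⟩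
  · exact ⟨N, _, hN, hp, by simpa using hu, by simpa [hlast] using hv⟩

end HamiltonianCycles

section Bondy

variable {V : Type*} {G : SimpleGraph V} {p : ℕ → V} {N x y : ℕ}

theorem IsIndexedPath.exists_isCycle_of_chords_of_le (hp : IsIndexedPath G p N)
    (h0N : G.Adj (p 0) (p N)) (hx : 0 < x) (hxy : x ≤ y) (hy : y < N) (h0x : G.Adj (p 0) (p x))
    (hNy : G.Adj (p N) (p y)) : ∃ (v : V) (c : G.Walk v v), c.IsCycle ∧ c.length = y - x + 3 := by
  classical
  have hpath : HasPathOn G (p 0) (p y) ((Icc 0 0).image p ∪ (Icc x y).image p) :=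
    (hp.hasPathOn le_rfl N.zero_le).join h0x (hp.hasPathOn hxy hy.le)
      (hp.disjoint_image N.zero_le hy.le (.inl hx))
  have hdisj : Disjoint ((Icc 0 0).image p ∪ (Icc x y).image p) ((Icc N N).image p) :=
    disjoint_union_left.mpr ⟨hp.disjoint_image N.zero_le le_rfl (.inl (by omega)),
      hp.disjoint_image hy.le le_rfl (.inl hy)⟩
  have hcard : #((Icc 0 0).image p ∪ (Icc x y).image p ∪ (Icc N N).image p) = y - x + 3 := by
    rw [← image_union, ← image_union, hp.card_image (by simp; omega), card_union_of_disjoint,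
      card_union_of_disjoint]
    · simp only [Nat.card_Icc]; omega
    · simp; omega
    · simp; omega
  simpa only [hcard] using (hpath.join hNy.symm (hp.hasPathOn le_rfl le_rfl) hdisj).exists_isCycle
    h0N (by omega)

theorem IsIndexedPath.exists_isCycle_of_chords_of_lt (hp : IsIndexedPath G p N)
    (hy : 0 < y) (hyx : y < x) (hx : x < N) (h0x : G.Adj (p 0) (p x)) (hNy : G.Adj (p N) (p y)) :
    ∃ (v : V) (c : G.Walk v v), c.IsCycle ∧ c.length = y + 1 + (N + 1 - x) := by
  classical
  have hdisj : Disjoint ((Icc 0 y).image p) ((Icc x N).image p) :=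
    hp.disjoint_image (by omega) le_rfl (.inl hyx)
  have hpath : HasPathOn G (p 0) (p x) ((Icc 0 y).image p ∪ (Icc x N).image p) :=
    (hp.hasPathOn y.zero_le (by omega)).join hNy.symm (hp.hasPathOn hx.le le_rfl).symm hdisj
  have hcard : #((Icc 0 y).image p ∪ (Icc x N).image p) = y + 1 + (N + 1 - x) := by
    rw [card_union_of_disjoint hdisj, hp.card_image (by simp; omega), hp.card_image (by simp)]
    simp
  simpa only [hcard] using hpath.exists_isCycle h0x (by omega)

/-- The two ends have at least `N` inner neighbours in all, so the two sets of inner neighbours meet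
after a cyclic shift by `d` of the `N - 1` inner positions. -/
theorem IsSpanningPath.exists_chords_of_lt_degree_add_degree [Fintype V] [DecidableRel G.Adj]
    (hp : IsSpanningPath G p N) (hdeg : N + 2 ≤ G.degree (p 0) + G.degree (p N)) {d : ℕ}
    (hd : d + 2 ≤ N) : ∃ x ∈ Ioo 0 N, ∃ y ∈ Ioo 0 N, G.Adj (p 0) (p x) ∧ G.Adj (p N) (p y) ∧
      (y = x + d ∨ y + (N - 1) = x + d) := by
  classical
  set X := {x ∈ Ioo 0 N | G.Adj (p 0) (p x)}
  set Y := {y ∈ Ioo 0 N | G.Adj (p N) (p y)}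
  let shift (x : ℕ) : ℕ := if x + d < N then x + d else x + d - (N - 1)
  have hXdeg : G.degree (p 0) ≤ #X + 1 := by
    rw [hp.degree_eq]
    refine (card_le_card (t := insert N X) fun x ↦ ?_).trans (card_insert_le _ _)
    have := G.loopless.irrefl (p 0)
    grind
  have hYdeg : G.degree (p N) ≤ #Y + 1 := by
    rw [hp.degree_eq]
    refine (card_le_card (t := insert 0 Y) fun y ↦ ?_).trans (card_insert_le _ _)
    have := G.loopless.irrefl (p N)
    grind
  have hshift : #(X.image shift) = #X := card_image_of_injOn fun x hx x' hx' h ↦ by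
    simp only [shift] at h
    grind
  have hXsub : X.image shift ⊆ Ioo 0 N := by
    simp only [image_subset_iff, shift]
    grind
  obtain ⟨y, hy⟩ : (X.image shift ∩ Y).Nonempty :=
    inter_nonempty_of_card_lt_card_add_card hXsub (filter_subset _ _)
      (by rw [hshift, Nat.card_Ioo]; omega)
  obtain ⟨hyX, hyY⟩ := mem_inter.mp hy
  obtain ⟨x, hxX, rfl⟩ := mem_image.mp hyX
  obtain ⟨hx, h0x⟩ := mem_filter.mp hxX
  obtain ⟨hy, hNy⟩ := mem_filter.mp hyY
  rw [mem_Ioo] at hx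
  exact ⟨x, mem_Ioo.mpr hx, shift x, hy, h0x, hNy, by simp only [shift]; split_ifs <;> omega⟩

theorem IsSpanningPath.pancyclic_of_lt_degree_add_degree [Fintype V] [DecidableRel G.Adj]
    (hp : IsSpanningPath G p N) (h0N : G.Adj (p 0) (p N))
    (hdeg : N + 2 ≤ G.degree (p 0) + G.degree (p N)) : Pancyclic G := by
  classical
  intro l hl3 hlV
  rw [hp.card_eq] at hlV
  rcases hlV.eq_or_lt with rfl | hlN
  · simpa [hp.card_eq] using
      hp.hasPathOn_univ.exists_isCycle h0N (by rwa [card_univ, hp.card_eq])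
  obtain ⟨x, hx, y, hy, h0x, hNy, hxy⟩ :=
    hp.exists_chords_of_lt_degree_add_degree hdeg (d := l - 3) (by omega)
  rw [mem_Ioo] at hx hy
  rcases hxy with hxy | hxy
  · obtain ⟨v, c, hc, hlen⟩ :=
      hp.exists_isCycle_of_chords_of_le h0N hx.1 (by omega) hy.2 h0x hNy
    exact ⟨v, c, hc, by omega⟩
  · obtain ⟨v, c, hc, hlen⟩ :=
      hp.exists_isCycle_of_chords_of_lt hy.1 (by omega) hx.2 h0x hNy
    exact ⟨v, c, hc, by omega⟩

/-- **Bondy's theorem**: on average, hence somewhere, two consecutive vertices of the Hamiltonian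
cycle have degree sum above the order. -/
theorem pancyclic_of_isHamiltonian_of_sq_lt [DecidableEq V] [Fintype V] [DecidableRel G.Adj]
    (hV : 3 ≤ Fintype.card V) (hG : G.IsHamiltonian)
    (hm : Fintype.card V ^ 2 < 4 * #G.edgeFinset) : Pancyclic G := by
  have : Nontrivial V := Fintype.one_lt_card_iff_nontrivial.mp (by omega)
  obtain ⟨N, c, hc, hsurj⟩ := exists_isIndexedCycle_of_isHamiltonian hG
  have hcard : Fintype.card V = N + 1 := (hc.isSpanningPath hsurj 0).card_eq
  have hsum : ∑ i, G.degree (c i) = 2 * #G.edgeFinset := by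
    rw [← G.sum_degrees_eq_twice_card_edges]
    exact (Equiv.ofBijective c ⟨hc.injective, hsurj⟩).sum_comp (fun x ↦ G.degree x)
  have hsum_succ : ∑ i, G.degree (c (i + 1)) = 2 * #G.edgeFinset :=
    (Equiv.sum_comp (Equiv.addRight (1 : ZMod (N + 1))) fun i ↦ G.degree (c i)).trans hsum
  obtain ⟨i, hi⟩ : ∃ i, N + 2 ≤ G.degree (c i) + G.degree (c (i + 1)) := by
    by_contra! hlt
    have := sum_le_card_nsmul univ _ _ fun i _ ↦ Nat.lt_succ_iff.mp (hlt i)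
    rw [sum_add_distrib, hsum, hsum_succ, card_univ, ZMod.card, smul_eq_mul] at this
    rw [hcard] at hm
    nlinarith
  have hlast : i + 1 + N = i := by rw [natCast_add_one_eq_neg_one]; ring
  refine (hc.isSpanningPath hsurj (i + 1)).pancyclic_of_lt_degree_add_degree ?_ ?_
  · simpa [hlast] using (hc.adj i).symm
  · rwa [hlast, Nat.cast_zero, add_zero, add_comm (G.degree _)]

end Bondy

section Bypass

variable {V : Type*} [DecidableEq V] {G : SimpleGraph V} {M z : ℕ} {a b w : V}

section Successors

variable [DecidableRel G.Adj] {c : ZMod (M + 1) → V}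

/-- The vertex `w` together with the successors, on the cycle `c`, of the neighbours of `w`. -/
def insertSuccessors (G : SimpleGraph V) [DecidableRel G.Adj] (c : ZMod (M + 1) → V) (w : V) :
    Finset V :=
  insert w (image (fun i ↦ c (i + 1)) {i | G.Adj w (c i)})

theorem self_mem_insertSuccessors : w ∈ insertSuccessors G c w := mem_insert_self ..

theorem mem_insertSuccessors_of_adj {i : ZMod (M + 1)} (h : G.Adj w (c i)) :
    c (i + 1) ∈ insertSuccessors G c w :=
  mem_insert_of_mem (mem_image_of_mem _ (by simpa using h))

end Successors

variable [Fintype V]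

theorem HasPathOn.not_adj_of_adj (h : HasPathOn G a b (univ.erase w)) (hV : 3 ≤ Fintype.card V)
    (hG : ¬ G.IsHamiltonian) (hwb : G.Adj w b) : ¬ G.Adj w a := fun hwa ↦ by
  have hpath := h.join hwb.symm (.singleton w) (by simp)
  rw [union_comm, ← insert_eq, insert_erase (mem_univ w)] at hpath
  exact hG (hpath.isHamiltonian hwa.symm hV)

theorem IsIndexedPath.not_adj_of_image_eq_erase {q : ℕ → V} (hq : IsIndexedPath G q M)
    (hV : 3 ≤ Fintype.card V) (hG : ¬ G.IsHamiltonian) (hw : (Icc 0 M).image q = univ.erase w)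
    (hz : z < M) (hwz : G.Adj w (q z)) (hwM : G.Adj w (q M)) : ¬ G.Adj (q 0) (q (z + 1)) :=
  fun h ↦ by
    have hpath := (hq.hasPathOn z.zero_le hz.le).symm.join h (hq.hasPathOn hz le_rfl)
      (hq.disjoint_image hz.le le_rfl (.inl z.lt_succ_self))
    rw [← image_union, show Icc 0 z ∪ Icc (z + 1) M = Icc 0 M by grind, hw] at hpath
    exact hpath.not_adj_of_adj hV hG hwM hwz

variable [DecidableRel G.Adj] {c : ZMod (M + 1) → V}

theorem IsIndexedCycle.card_insertSuccessors (hc : IsIndexedCycle G c)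
    (hw : Set.range c = {w}ᶜ) : #(insertSuccessors G c w) = G.degree w + 1 := by
  have hnotMem : w ∉ Set.range c := by simp [hw]
  have hdeg : #{i | G.Adj w (c i)} = G.degree w := by
    rw [← card_neighborFinset_eq_degree, ← card_image_of_injective _ hc.injective]
    congr 1
    ext x
    have hx : G.Adj w x → x ∈ Set.range c := fun h ↦ by simpa [hw] using h.ne'
    grind [mem_neighborFinset]
  rw [insertSuccessors, card_insert_of_notMem (by grind), card_image_of_injective, hdeg]
  exact hc.injective.comp (add_left_injective 1)

theorem IsIndexedCycle.isIndepSet_insertSuccessors (hc : IsIndexedCycle G c)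
    (hw : Set.range c = {w}ᶜ) (hV : 3 ≤ Fintype.card V) (hG : ¬ G.IsHamiltonian) :
    G.IsIndepSet (insertSuccessors G c w : Set V) := by
  have himage (a : ZMod (M + 1)) : (Icc 0 M).image (fun k : ℕ ↦ c (a + k)) = univ.erase w := by
    ext x
    have hx : x ∈ Set.range c ↔ x ≠ w := by simp [hw]
    simp only [mem_image, mem_erase, mem_univ, and_true, ← hx, Set.mem_range]
    refine ⟨fun ⟨k, _, hk⟩ ↦ ⟨_, hk⟩, fun ⟨i, hi⟩ ↦ ⟨(i - a).val, ?_, by simpa using hi⟩⟩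
    exact mem_Icc.mpr ⟨Nat.zero_le _, Nat.lt_succ_iff.mp (ZMod.val_lt _)⟩
  have hlast (i : ZMod (M + 1)) : i + 1 + M = i := by rw [natCast_add_one_eq_neg_one]; ring
  have hfirst {i} (hi : G.Adj w (c i)) : ¬ G.Adj w (c (i + 1)) := by
    have hpath := (hc.isIndexedPath (i + 1)).hasPathOn M.zero_le le_rfl
    rw [himage] at hpath
    simpa using hpath.not_adj_of_adj hV hG (by simpa [hlast] using hi)
  have hsucc {i j} (hi : G.Adj w (c i)) (hj : G.Adj w (c j)) : ¬ G.Adj (c (i + 1)) (c (j + 1)) := by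
    intro hij
    have hz : (j - (i + 1)).val ≠ M := fun h ↦ by
      have hd := ZMod.natCast_zmod_val (j - (i + 1))
      rw [h, natCast_add_one_eq_neg_one] at hd
      exact hij.ne (by grind)
    have hzM : (j - (i + 1)).val < M := lt_of_le_of_ne (Nat.lt_succ_iff.mp (ZMod.val_lt _)) hz
    refine (hc.isIndexedPath (i + 1)).not_adj_of_image_eq_erase hV hG (himage _) hzM ?_ ?_ ?_
    · simpa using hj
    · simpa [hlast] using hi
    · have : i + 1 + ((j - (i + 1)) + 1) = j + 1 := by ring
      simpa [this] using hij
  intro x hx y hy _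
  simp only [insertSuccessors, coe_insert, coe_image, coe_filter, mem_univ, true_and,
    Set.mem_insert_iff, Set.mem_image, Set.mem_ofPred_eq] at hx hy
  rcases hx with rfl | ⟨i, hi, rfl⟩ <;> rcases hy with rfl | ⟨j, hj, rfl⟩
  · exact G.loopless.irrefl _
  · exact hfirst hj
  · exact fun h ↦ hfirst hi h.symm
  · exact hsucc hi hj

end Bypass

section Toughness

variable {V : Type*} {G H : SimpleGraph V} {t : ℝ}

theorem card_image_compl_le_numComponents {ι : Type*} [Fintype V] [DecidableEq V] [DecidableEq ι]
    {f : V → ι} {S : Finset V} (hf : ∀ x y, x ∉ S → y ∉ S → G.Adj x y → f x = f y) :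
    #(Sᶜ.image f) ≤ numComponents G S := by
  let f' (x : ((S : Set V)ᶜ : Set V)) : Sᶜ.image f :=
    ⟨f x, mem_image_of_mem f (mem_compl.mpr fun h ↦ x.2 h)⟩
  have hwalk {x y} (w : (G.induce (S : Set V)ᶜ).Walk x y) : f' x = f' y := by
    induction w with
    | nil => rfl
    | @cons a b _ h _ ih =>
      exact (Subtype.ext (hf _ _ (fun ha ↦ a.2 ha) (fun hb ↦ b.2 hb) h)).trans ih
  let F (C : (G.induce (S : Set V)ᶜ).ConnectedComponent) : Sᶜ.image f :=
    C.lift f' fun _ _ w _ ↦ hwalk w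
  have hF : F.Surjective := fun ⟨i, hi⟩ ↦ by
    obtain ⟨x, hx, rfl⟩ := mem_image.mp hi
    exact ⟨(G.induce (S : Set V)ᶜ).connectedComponentMk ⟨x, by simpa using hx⟩, rfl⟩
  rw [← Nat.card_eq_finsetCard]
  exact Nat.card_le_card_of_surjective F hF

theorem numComponents_anti [Finite V] (hGH : G ≤ H) (S : Finset V) :
    numComponents H S ≤ numComponents G S :=
  ConnectedComponent.card_le_card_of_le (comap_monotone _ hGH)

theorem IsTough.mono [Finite V] (ht : 0 ≤ t) (hG : IsTough t G) (hGH : G ≤ H) :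
    IsTough t H := fun S hS ↦
  have hle := numComponents_anti hGH S
  (mul_le_mul_of_nonneg_left (by exact_mod_cast hle) ht).trans (hG S (hS.trans hle))

theorem IsTough.mul_card_image_compl_le {ι : Type*} [Fintype V] [DecidableEq V] [DecidableEq ι]
    (ht : 0 ≤ t) (hG : IsTough t G) {f : V → ι} {S : Finset V}
    (hf : ∀ x y, x ∉ S → y ∉ S → G.Adj x y → f x = f y)
    (h2 : 2 ≤ #(Sᶜ.image f)) : t * #(Sᶜ.image f) ≤ #S :=
  have hle := card_image_compl_le_numComponents hf
  (mul_le_mul_of_nonneg_left (by exact_mod_cast hle) ht).trans (hG S (h2.trans hle))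

theorem IsTough.add_one_mul_card_le_of_isIndepSet [Fintype V] (ht : 0 ≤ t) (hG : IsTough t G)
    {I : Finset V} (hI : G.IsIndepSet (I : Set V)) (h2 : 2 ≤ #I) :
    (t + 1) * #I ≤ Fintype.card V := by
  classical
  have h := hG.mul_card_image_compl_le ht (f := id) (S := Iᶜ)
    (fun x y hx hy hxy ↦ absurd hxy (hI (by simpa using hx) (by simpa using hy) hxy.ne))
    (by simpa using h2)
  rw [compl_compl, image_id, card_compl, Nat.cast_sub (card_le_univ I)] at h
  linarith

/-- Removing `S` leaves the vertices of `W` isolated and separates `P` from the rest, so that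
there are at least `#W + 2` components. -/
theorem IsTough.mul_card_add_two_le [Finite V] [DecidableEq V] (ht : 0 ≤ t) (hG : IsTough t G)
    {W P S : Finset V} {x v : V}
    (hWS : Disjoint W S) (hW : ∀ y ∈ W, ∀ z, G.Adj y z → z ∈ S)
    (hP : ∀ y ∈ P, ∀ z, G.Adj y z → z ∈ S ∪ P) (hxP : x ∈ P) (hx : x ∉ W ∪ S)
    (hv : v ∉ W ∪ P ∪ S) : t * (#W + 2) ≤ #S := by
  cases nonempty_fintype V
  let f (y : V) : V := if y ∈ W then y else if y ∈ P then x else v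
  have hsub : insert x (insert v W) ⊆ Sᶜ.image f := by
    intro y hy
    refine mem_image.mpr ⟨y, ?_⟩
    simp only [mem_union, not_or] at hx hv
    rcases mem_insert.mp hy with rfl | hy
    · exact ⟨mem_compl.mpr hx.2, by simp [f, hx.1, hxP]⟩
    rcases mem_insert.mp hy with rfl | hy
    · exact ⟨mem_compl.mpr hv.2, by simp [f, hv.1.1, hv.1.2]⟩
    · exact ⟨mem_compl.mpr (Finset.disjoint_left.mp hWS hy), if_pos hy⟩
  have hcard : #(insert x (insert v W)) = #W + 2 := by
    rw [card_insert_of_notMem (by grind), card_insert_of_notMem (by grind)]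
  have hle := hcard ▸ card_le_card hsub
  refine le_trans ?_ (hG.mul_card_image_compl_le ht (f := f) ?_ (by omega))
  · exact mul_le_mul_of_nonneg_left (by exact_mod_cast hle) ht
  · intro y z hy hz hyz
    have := hyz.symm
    grind

end Toughness

section BypassVertices

variable {V : Type*} {G : SimpleGraph V} {p : ℕ → V} {N k y z : ℕ}

/-- The vertices of the path `p` other than `p (k + 1)`, in the order
`p 0, …, p k, p N, …, p (k + 2)`. -/
def bypassCycle (p : ℕ → V) (N k : ℕ) (i : ZMod (N - 1 + 1)) : V :=
  p (if i.val ≤ k then i.val else N + k + 1 - i.val)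

theorem bypassCycle_natCast (hz : z < N) :
    bypassCycle p N k (z : ZMod (N - 1 + 1)) = p (if z ≤ k then z else N + k + 1 - z) := by
  rw [bypassCycle, ZMod.val_cast_of_lt (by omega)]

theorem IsSpanningPath.range_bypassCycle (hp : IsSpanningPath G p N) (hk : k + 1 < N) :
    Set.range (bypassCycle p N k) = {p (k + 1)}ᶜ := by
  refine Set.Subset.antisymm ?_ fun x hx ↦ ?_
  · rintro _ ⟨i, rfl⟩
    have hi : i.val < N - 1 + 1 := ZMod.val_lt i
    exact hp.ne (by split_ifs <;> omega) hk.le (by split_ifs <;> omega)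
  · obtain ⟨y, hy, rfl⟩ := hp.surj x
    have hyk : y ≠ k + 1 := by rintro rfl; exact hx rfl
    rcases Nat.lt_or_gt_of_ne hyk with hyk | hyk
    · exact ⟨y, by rw [bypassCycle_natCast (by omega), if_pos (by omega)]⟩
    · refine ⟨(N + k + 1 - y : ℕ), ?_⟩
      rw [bypassCycle_natCast (by omega), if_neg (by omega), Nat.sub_sub_self (by omega)]

variable [DecidableRel G.Adj]

/-- The positions `k` such that `p (k + 1)` can be bypassed: dropping it from the path `p`, the
other vertices form the cycle `p 0, …, p k, p N, …, p (k + 2)`. -/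
def bypassIndices (G : SimpleGraph V) [DecidableRel G.Adj] (p : ℕ → V) (N : ℕ) : Finset ℕ :=
  {k ∈ range (N - 1) | G.Adj (p N) (p k) ∧ G.Adj (p 0) (p (k + 2))}

theorem mem_bypassIndices :
    k ∈ bypassIndices G p N ↔ k + 1 < N ∧ G.Adj (p N) (p k) ∧ G.Adj (p 0) (p (k + 2)) := by
  rw [bypassIndices, mem_filter, mem_range, Nat.lt_sub_iff_add_lt]

theorem IsIndexedPath.isIndexedCycle_bypassCycle (hp : IsIndexedPath G p N)
    (hk : k ∈ bypassIndices G p N) : IsIndexedCycle G (bypassCycle p N k) := by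
  obtain ⟨hkN, hNk, h0k⟩ := mem_bypassIndices.mp hk
  refine IsIndexedPath.isIndexedCycle
    (p := fun z ↦ p (if z ≤ k then z else N + k + 1 - z)) ⟨fun z hz ↦ ?_, fun y hy z hz h ↦ ?_⟩ ?_
  · rcases lt_trichotomy z k with hzk | rfl | hzk
    · simpa only [hzk.le, Nat.succ_le_of_lt hzk, if_true] using hp.adj z (by omega)
    · simpa [show N + z + 1 - (z + 1) = N by omega] using hNk.symm
    · have h := (hp.adj (N + k + 1 - (z + 1)) (by omega)).symm
      rw [show N + k + 1 - (z + 1) + 1 = N + k + 1 - z by omega] at h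
      simpa only [show ¬ z ≤ k by omega, show ¬ z + 1 ≤ k by omega, if_false] using h
  · rw [Set.mem_Iic] at hy hz
    have := hp.injOn (Set.mem_Iic.mpr (by split_ifs <;> omega))
      (Set.mem_Iic.mpr (by split_ifs <;> omega)) h
    split_ifs at this <;> omega
  · simpa [show ¬ N - 1 ≤ k by omega, show N + k + 1 - (N - 1) = k + 2 by omega] using h0k.symm

variable [DecidableEq V]

/-- The bypassed vertex `p (k + 1)` and the successors of its neighbours on the cycle through all
the other vertices. -/
def bypassSet (G : SimpleGraph V) [DecidableRel G.Adj] (p : ℕ → V) (N k : ℕ) : Finset V :=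
  insertSuccessors G (bypassCycle p N k) (p (k + 1))

theorem mem_bypassSet_of_adj_lt (hk : k + 1 < N) (hy : y < k) (h : G.Adj (p (k + 1)) (p y)) :
    p (y + 1) ∈ bypassSet G p N k := by
  have := mem_insertSuccessors_of_adj (G := G) (w := p (k + 1)) (c := bypassCycle p N k) (i := y)
    (by rwa [bypassCycle_natCast (by omega), if_pos (by omega)])
  rwa [← Nat.cast_succ, bypassCycle_natCast (by omega), if_pos (by omega)] at this

theorem mem_bypassSet_of_lt_adj (hy : k + 2 < y) (hyN : y ≤ N) (h : G.Adj (p (k + 1)) (p y)) :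
    p (y - 1) ∈ bypassSet G p N k := by
  have := mem_insertSuccessors_of_adj (G := G) (w := p (k + 1)) (c := bypassCycle p N k)
    (i := (N + k + 1 - y : ℕ)) (by
      rwa [bypassCycle_natCast (by omega), if_neg (by omega), Nat.sub_sub_self (by omega)])
  rwa [← Nat.cast_succ, bypassCycle_natCast (by omega), if_neg (by omega),
    show N + k + 1 - (N + k + 1 - y).succ = y - 1 by omega] at this

theorem IsIndexedPath.zero_mem_bypassSet (hp : IsIndexedPath G p N) (hk : k + 1 < N) :
    p 0 ∈ bypassSet G p N k := by
  have := mem_insertSuccessors_of_adj (G := G) (w := p (k + 1)) (c := bypassCycle p N k)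
    (i := (N - 1 : ℕ)) (by
      rw [bypassCycle_natCast (by omega), if_neg (by omega),
        show N + k + 1 - (N - 1) = k + 2 by omega]
      exact hp.adj _ hk)
  rwa [natCast_add_one_eq_neg_one, neg_add_cancel, ← Nat.cast_zero,
    bypassCycle_natCast (by omega), if_pos k.zero_le] at this

theorem IsIndexedPath.last_mem_bypassSet (hp : IsIndexedPath G p N) (hk : k + 1 < N) :
    p N ∈ bypassSet G p N k := by
  have := mem_insertSuccessors_of_adj (G := G) (w := p (k + 1)) (c := bypassCycle p N k)
    (i := k) (by
      rw [bypassCycle_natCast (by omega), if_pos le_rfl]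
      exact (hp.adj _ (by omega)).symm)
  rwa [← Nat.cast_succ, bypassCycle_natCast (by omega), if_neg (by omega),
    show N + k + 1 - k.succ = N by omega] at this

variable [Fintype V]

theorem IsSpanningPath.card_bypassSet (hp : IsSpanningPath G p N) (hk : k ∈ bypassIndices G p N) :
    #(bypassSet G p N k) = G.degree (p (k + 1)) + 1 :=
  (hp.isIndexedCycle_bypassCycle hk).card_insertSuccessors
    (hp.range_bypassCycle (mem_bypassIndices.mp hk).1)

theorem IsSpanningPath.isIndepSet_bypassSet (hp : IsSpanningPath G p N) (hG : ¬ G.IsHamiltonian)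
    (hk : k ∈ bypassIndices G p N) : G.IsIndepSet (bypassSet G p N k : Set V) := by
  have hkN := (mem_bypassIndices.mp hk).1
  exact (hp.isIndexedCycle_bypassCycle hk).isIndepSet_insertSuccessors
    (hp.range_bypassCycle hkN) (by rw [hp.card_eq]; omega) hG

end BypassVertices

section Counting

variable {V : Type*} [Fintype V] {G : SimpleGraph V} {p : ℕ → V} {N k : ℕ}

theorem IsSpanningPath.not_adj_of_adj_succ [DecidableEq V] (hp : IsSpanningPath G p N)
    (hN : 2 ≤ N) (hG : ¬ G.IsHamiltonian) (hk : k < N) (h : G.Adj (p 0) (p (k + 1))) :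
    ¬ G.Adj (p N) (p k) :=
  fun hNk ↦ by
    have hpath := (hp.hasPathOn k.zero_le hk.le).join hNk.symm (hp.hasPathOn hk le_rfl).symm
      (hp.disjoint_image hk.le le_rfl (.inl k.lt_succ_self))
    have huniv : (Icc 0 k).image p ∪ (Icc (k + 1) N).image p = univ :=
      eq_univ_of_forall fun x ↦ by
        obtain ⟨y, hy, rfl⟩ := hp.surj x
        rw [← image_union]
        exact mem_image_of_mem p (by grind)
    rw [huniv] at hpath
    exact hG (hpath.isHamiltonian h (by rw [hp.card_eq]; omega))

variable [DecidableRel G.Adj]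

theorem IsSpanningPath.degree_first (hp : IsSpanningPath G p N) :
    G.degree (p 0) = #{k ∈ range N | G.Adj (p 0) (p (k + 1))} := by
  rw [hp.degree_eq, Finset.card_filter, sum_range_succ', Finset.card_filter]
  simp

theorem IsSpanningPath.degree_last (hp : IsSpanningPath G p N) :
    G.degree (p N) = #{k ∈ range N | G.Adj (p N) (p k)} := by
  rw [hp.degree_eq, Finset.card_filter, sum_range_succ, Finset.card_filter]
  simp

theorem IsSpanningPath.degree_first_of_not_adj (hp : IsSpanningPath G p N)
    (hends : ¬ G.Adj (p 0) (p N)) :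
    G.degree (p 0) = #{k ∈ range N | G.Adj (p 0) (p k)} := by
  rw [hp.degree_eq, Finset.card_filter, sum_range_succ, Finset.card_filter]
  simp [hends]

variable [DecidableEq V]

theorem IsSpanningPath.card_commonNeighbors (hp : IsSpanningPath G p N) :
    #(G.neighborFinset (p 0) ∩ G.neighborFinset (p N)) =
      #{k ∈ range N | G.Adj (p 0) (p k) ∧ G.Adj (p N) (p k)} := by
  rw [neighborFinset_eq_filter, neighborFinset_eq_filter, ← filter_and, hp.card_filter,
    Finset.card_filter, sum_range_succ, Finset.card_filter]
  simp

variable (hp : IsSpanningPath G p N) (hN : 2 ≤ N) (hG : ¬ G.IsHamiltonian)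
include hp hN hG

theorem IsSpanningPath.disjoint_filter_adj :
    Disjoint {k ∈ range N | G.Adj (p 0) (p (k + 1))} {k ∈ range N | G.Adj (p N) (p k)} :=
  disjoint_filter.mpr fun _ hk h ↦ hp.not_adj_of_adj_succ hN hG (mem_range.mp hk) h

theorem IsSpanningPath.degree_add_degree_le : G.degree (p 0) + G.degree (p N) ≤ N := by
  rw [hp.degree_first, hp.degree_last,
    ← card_union_of_disjoint (hp.disjoint_filter_adj hN hG), ← filter_or]
  exact (card_filter_le _ _).trans_eq (card_range N)

/-- A common neighbour `p k` of the ends has `p (k + 1)` not adjacent to `p 0`. There are as many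
`k` with `p 0` adjacent to `p (k + 1)` but not to `p k`, and such a `k > 0` comes from a bypass
index unless `k - 1` is one of the `N - deg (p 0) - deg (p N)` positions not accounted for in
`disjoint_filter_adj`. -/
theorem IsSpanningPath.card_commonNeighbors_le :
    #(G.neighborFinset (p 0) ∩ G.neighborFinset (p N)) + G.degree (p 0) + G.degree (p N) ≤
      #(bypassIndices G p N) + 1 + N := by
  set A := {k ∈ range N | G.Adj (p 0) (p (k + 1))}
  set B := {k ∈ range N | G.Adj (p N) (p k)}
  set X := {k ∈ range N | G.Adj (p 0) (p k)}
  have hAB : Disjoint A B := hp.disjoint_filter_adj hN hG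
  have hcommon : #(G.neighborFinset (p 0) ∩ G.neighborFinset (p N)) ≤ #(A \ X) := by
    rw [hp.card_commonNeighbors, ← card_sdiff_comm
      ((hp.degree_first_of_not_adj (hp.not_adj hN hG)).symm.trans hp.degree_first)]
    refine card_le_card fun k hk ↦ ?_
    obtain ⟨hkN, h0k, hNk⟩ := mem_filter.mp hk
    exact mem_sdiff.mpr ⟨mem_filter.mpr ⟨hkN, h0k⟩,
      Finset.disjoint_right.mp hAB (mem_filter.mpr ⟨hkN, hNk⟩)⟩
  have hcover : A \ X ⊆ insert 0 ((bypassIndices G p N ∪ range N \ (A ∪ B)).image (· + 1)) := by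
    rintro (_ | k) hk
    · exact mem_insert_self ..
    refine mem_insert_of_mem (mem_image_of_mem _ ?_)
    grind [mem_bypassIndices]
  have hrest : #(range N \ (A ∪ B)) + (G.degree (p 0) + G.degree (p N)) = N := by
    rw [hp.degree_first, hp.degree_last, ← card_union_of_disjoint hAB,
      card_sdiff_add_card_eq_card (union_subset (filter_subset _ _) (filter_subset _ _)),
      card_range]
  have hle := (card_le_card hcover).trans (card_insert_le _ _)
  have := card_image_le (s := bypassIndices G p N ∪ range N \ (A ∪ B)) (f := (· + 1))
  have := card_union_le (bypassIndices G p N) (range N \ (A ∪ B))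
  omega

end Counting

section Extremal

variable {V : Type*} [Fintype V] {G : SimpleGraph V} [DecidableRel G.Adj]

section Pairs

variable [DecidableEq V]

/-- The common neighbours of `u` and `v`. -/
def commonNbrs (G : SimpleGraph V) [DecidableRel G.Adj] (u v : V) : Finset V :=
  G.neighborFinset u ∩ G.neighborFinset v

/-- The vertices other than `u` and `v` that are adjacent to neither. -/
def commonNonNbrs (G : SimpleGraph V) [DecidableRel G.Adj] (u v : V) : Finset V :=
  ({u, v} ∪ (G.neighborFinset u ∪ G.neighborFinset v))ᶜ

variable {u v x : V}

theorem mem_commonNbrs : x ∈ commonNbrs G u v ↔ G.Adj u x ∧ G.Adj v x := by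
  simp [commonNbrs]

theorem mem_commonNonNbrs :
    x ∈ commonNonNbrs G u v ↔ (x ≠ u ∧ x ≠ v) ∧ ¬ G.Adj u x ∧ ¬ G.Adj v x := by
  simp [commonNonNbrs, and_assoc]

theorem card_commonNbrs_le : #(commonNbrs G u v) ≤ G.degree u :=
  card_le_card inter_subset_left

theorem card_commonNonNbrs (hne : u ≠ v) (huv : ¬ G.Adj u v) :
    #(commonNonNbrs G u v) + 2 + G.degree u + G.degree v =
      Fintype.card V + #(commonNbrs G u v) := by
  have hdisj : Disjoint {u, v} (G.neighborFinset u ∪ G.neighborFinset v) := by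
    simp [huv, G.adj_comm v u]
  have hcard := card_union_of_disjoint hdisj
  have hinter := card_union_add_card_inter (G.neighborFinset u) (G.neighborFinset v)
  have hcompl := card_add_card_compl ({u, v} ∪ (G.neighborFinset u ∪ G.neighborFinset v))
  rw [card_pair hne] at hcard
  rw [card_neighborFinset_eq_degree, card_neighborFinset_eq_degree] at hinter
  simp only [commonNbrs, commonNonNbrs]
  omega

/-- Upper bound for the degree of `x` when every nonadjacent pair has degree sum at most
`G.degree u + G.degree v`. -/
def degreeCap (G : SimpleGraph V) [DecidableRel G.Adj] (u v x : V) : ℕ :=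
  if G.Adj v x then if G.Adj u x then Fintype.card V - 1 else G.degree v
  else if x = v then G.degree v else G.degree u

theorem sum_degreeCap (u v : V) :
    (∑ x, degreeCap G u v x : ℝ) = G.degree v * (G.degree v + 1) +
      (G.degree u + #(commonNbrs G u v)) * (Fintype.card V - 1 - G.degree v) := by
  have hcast : ((Fintype.card V - 1 : ℕ) : ℝ) = Fintype.card V - 1 :=
    Nat.cast_pred (Fintype.card_pos_iff.mpr ⟨u⟩)
  have hsplit (x : V) : (degreeCap G u v x : ℝ) = G.degree u +
      ((if G.Adj v x then (G.degree v - G.degree u : ℝ) else 0) +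
        ((if x = v then (G.degree v - G.degree u : ℝ) else 0) +
          if x ∈ commonNbrs G u v then (Fintype.card V - 1 - G.degree v : ℝ) else 0)) := by
    have hvx : G.Adj v x → x ≠ v := fun h ↦ h.ne'
    simp only [degreeCap, mem_commonNbrs]
    split_ifs <;> grind
  have hdeg : ∑ x, (if G.Adj v x then (G.degree v - G.degree u : ℝ) else 0) =
      G.degree v * (G.degree v - G.degree u) := by
    rw [← sum_filter, ← neighborFinset_eq_filter, sum_const, card_neighborFinset_eq_degree,
      nsmul_eq_mul]
  simp only [hsplit, sum_add_distrib, hdeg, sum_ite_eq', sum_ite_mem, univ_inter, mem_univ,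
    if_true, sum_const, card_univ, nsmul_eq_mul]
  ring

end Pairs

/-- `p` is a Hamiltonian path from `u` to `v` in a nonhamiltonian graph, and `u`, `v` have the
largest degree sum among the nonadjacent pairs. -/
structure IsExtremalPath (G : SimpleGraph V) [DecidableEq V] [DecidableRel G.Adj] (p : ℕ → V)
    (N : ℕ) (u v : V) : Prop extends IsSpanningPath G p N where
  two_le : 2 ≤ N
  first : p 0 = u
  last : p N = v
  not_isHamiltonian : ¬ G.IsHamiltonian
  degree_le : G.degree u ≤ G.degree v
  degree_add_degree_le : ∀ x y, x ≠ y → ¬ G.Adj x y →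
    G.degree x + G.degree y ≤ G.degree u + G.degree v

variable [DecidableEq V] {p : ℕ → V} {N : ℕ} {u v w x y : V}

/-- The vertices of the path `p` that can be bypassed. -/
def bypassedVertices (G : SimpleGraph V) [DecidableRel G.Adj] (p : ℕ → V) (N : ℕ) : Finset V :=
  (bypassIndices G p N).image fun k ↦ p (k + 1)

namespace IsExtremalPath

variable (h : IsExtremalPath G p N u v)
include h

theorem ne : u ≠ v :=
  h.first ▸ h.last ▸ h.toIsIndexedPath.ne N.zero_le le_rfl (by have := h.two_le; omega)

theorem not_adj : ¬ G.Adj u v :=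
  h.first ▸ h.last ▸ h.toIsSpanningPath.not_adj h.two_le h.not_isHamiltonian

theorem degree_add_degree_lt : G.degree u + G.degree v < Fintype.card V := by
  have := h.toIsSpanningPath.degree_add_degree_le h.two_le h.not_isHamiltonian
  rw [h.first, h.last] at this
  rw [h.card_eq]
  omega

theorem degree_le_degreeCap (x : V) : G.degree x ≤ degreeCap G u v x := by
  have hlt := G.degree_lt_card_verts x
  have hux := h.degree_add_degree_le u x
  have hvx := h.degree_add_degree_le v x
  have hle := h.degree_le
  have := h.not_adj
  rw [degreeCap]
  split_ifs <;> grind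

theorem sum_degree_add_le (T : Finset V) {l : ℝ}
    (hT : ∑ x ∈ T, (G.degree x : ℝ) + l ≤ ∑ x ∈ T, (degreeCap G u v x : ℝ)) :
    ∑ x, (G.degree x : ℝ) + l ≤ G.degree v * (G.degree v + 1) +
      (G.degree u + #(commonNbrs G u v)) * (Fintype.card V - 1 - G.degree v) := by
  have hcompl : ∑ x ∈ Tᶜ, (G.degree x : ℝ) ≤ ∑ x ∈ Tᶜ, (degreeCap G u v x : ℝ) :=
    sum_le_sum fun x _ ↦ by exact_mod_cast h.degree_le_degreeCap x
  rw [← sum_degreeCap, ← sum_add_sum_compl T, ← sum_add_sum_compl T]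
  linarith

theorem card_bypassedVertices : #(bypassedVertices G p N) = #(bypassIndices G p N) :=
  card_image_of_injOn fun j hj k hk hjk ↦ by
    have hjN := mem_bypassIndices.mp hj
    have hkN := mem_bypassIndices.mp hk
    have := h.injOn (Set.mem_Iic.mpr (by omega)) (Set.mem_Iic.mpr (by omega)) hjk
    omega

theorem card_commonNbrs_add_le :
    #(commonNbrs G u v) + G.degree u + G.degree v ≤
      #(bypassedVertices G p N) + Fintype.card V := by
  have := h.toIsSpanningPath.card_commonNeighbors_le h.two_le h.not_isHamiltonian
  rw [h.first, h.last] at this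
  rw [h.card_bypassedVertices, h.card_eq, commonNbrs]
  omega

theorem bypassSet_subset {k : ℕ} (hk : k ∈ bypassIndices G p N) :
    bypassSet G p N k ⊆ {u, v} ∪ commonNonNbrs G u v := fun x hx ↦ by
  have hkN := (mem_bypassIndices.mp hk).1
  have hindep := h.isIndepSet_bypassSet h.not_isHamiltonian hk
  have hu := h.first ▸ h.zero_mem_bypassSet (G := G) hkN
  have hv := h.last ▸ h.last_mem_bypassSet (G := G) hkN
  have hux := @hindep u hu x hx
  have hvx := @hindep v hv x hx
  grind [mem_commonNonNbrs]

theorem mem_commonNonNbrs_of_mem_bypassSet {j k : ℕ} (hk : k ∈ bypassIndices G p N) (hj : j + 1 < N)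
    (hjk : p (j + 1) ∈ bypassSet G p N k) : p (j + 1) ∈ commonNonNbrs G u v := by
  have hu : p (j + 1) ≠ u := h.first ▸ h.toIsIndexedPath.ne hj.le N.zero_le (by omega)
  have hv : p (j + 1) ≠ v := h.last ▸ h.toIsIndexedPath.ne hj.le le_rfl hj.ne
  simpa [hu, hv] using h.bypassSet_subset hk hjk

theorem bypassedVertices_subset : bypassedVertices G p N ⊆ commonNonNbrs G u v :=
  image_subset_iff.mpr fun _ hk ↦
    h.mem_commonNonNbrs_of_mem_bypassSet hk (mem_bypassIndices.mp hk).1 self_mem_insertSuccessors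

theorem degree_le_of_mem_bypassedVertices (hw : w ∈ bypassedVertices G p N) :
    G.degree w ≤ #(commonNonNbrs G u v) + 1 := by
  obtain ⟨k, hk, rfl⟩ := mem_image.mp hw
  have hle := (card_le_card (h.bypassSet_subset hk)).trans (card_union_le _ _)
  rw [h.card_bypassSet hk, card_pair h.ne] at hle
  omega

theorem add_one_mul_degree_add_one_le {t : ℝ} (ht : 0 ≤ t) (htough : IsTough t G)
    (hw : w ∈ bypassedVertices G p N) : (t + 1) * (G.degree w + 1) ≤ Fintype.card V := by
  obtain ⟨k, hk, rfl⟩ := mem_image.mp hw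
  have hkN := (mem_bypassIndices.mp hk).1
  have htwo : 1 < #(bypassSet G p N k) := one_lt_card.mpr
    ⟨u, h.first ▸ h.zero_mem_bypassSet hkN, v, h.last ▸ h.last_mem_bypassSet hkN, h.ne⟩
  have := htough.add_one_mul_card_le_of_isIndepSet ht
    (h.isIndepSet_bypassSet h.not_isHamiltonian hk) htwo
  rw [h.card_bypassSet hk] at this
  exact_mod_cast this

theorem exists_mem_bypassIndices_of_adj (hW : commonNonNbrs G u v ⊆ bypassedVertices G p N)
    (hw : w ∈ commonNonNbrs G u v) (hwy : G.Adj w y) :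
    ∃ k ∈ bypassIndices G p N, y = p k ∨ y = p (k + 2) := by
  obtain ⟨k, hk, rfl⟩ := mem_image.mp (hW hw)
  obtain ⟨j, hj, rfl⟩ := h.surj y
  have hkN := (mem_bypassIndices.mp hk).1
  have mem_indices {i} (hi : i + 1 < N) (hik : p (i + 1) ∈ bypassSet G p N k) :
      i ∈ bypassIndices G p N := by
    obtain ⟨i', hi', heq⟩ := mem_image.mp (hW (h.mem_commonNonNbrs_of_mem_bypassSet hk hi hik))
    have hi'N := (mem_bypassIndices.mp hi').1
    have := h.injOn (Set.mem_Iic.mpr hi'N.le) (Set.mem_Iic.mpr hi.le) heq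
    rwa [← Nat.succ_injective this]
  have hjk : j ≠ k + 1 := by rintro rfl; exact hwy.ne rfl
  rcases lt_or_ge j k with hlt | hge
  · exact ⟨j, mem_indices (by omega) (mem_bypassSet_of_adj_lt hkN hlt hwy), .inl rfl⟩
  rcases hge.eq_or_lt with rfl | hgt
  · exact ⟨k, hk, .inl rfl⟩
  obtain rfl | hgt : j = k + 2 ∨ k + 2 < j := by omega
  · exact ⟨k, hk, .inr rfl⟩
  · obtain ⟨i, rfl⟩ : ∃ i, j = i + 2 := ⟨j - 2, by omega⟩
    exact ⟨i, mem_indices (by omega) (mem_bypassSet_of_lt_adj hgt hj hwy), .inr rfl⟩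

theorem adj_or_adj_of_adj (hW : commonNonNbrs G u v ⊆ bypassedVertices G p N)
    (hw : w ∈ commonNonNbrs G u v) (hwy : G.Adj w y) : G.Adj u y ∨ G.Adj v y := by
  obtain ⟨k, hk, rfl | rfl⟩ := h.exists_mem_bypassIndices_of_adj hW hw hwy
  · exact .inr (h.last ▸ (mem_bypassIndices.mp hk).2.1)
  · exact .inl (h.first ▸ (mem_bypassIndices.mp hk).2.2)

end IsExtremalPath
end Extremal

section Gap

theorem degree_bound_lt_of_gap {t n i j : ℝ} (ht : 2 ≤ t) (hi : 2 * t ≤ i) (hij : i ≤ j)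
    (hgap : i + j + 2 ≤ n) (hn : (t + 1) * (i + 1) ≤ n) :
    j * (j + 1) + 2 * i * (n - 1 - j) < (n - 2 * t) * (n - 2 * t - 1) + 6 * t ^ 2 := by
  obtain ⟨a, ha, rfl⟩ : ∃ a ≥ 0, t = 2 + a := ⟨_, sub_nonneg.mpr ht, by ring⟩
  obtain ⟨b, hb, rfl⟩ : ∃ b ≥ 0, i = 2 * (2 + a) + b := ⟨_, sub_nonneg.mpr hi, by ring⟩
  obtain ⟨c, hc, rfl⟩ : ∃ c ≥ 0, n = 2 * (2 + a) + b + j + 2 + c :=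
    ⟨_, sub_nonneg.mpr hgap, by ring⟩
  have hcoeff : 0 ≤ b + 1 + c := by positivity
  have hab : 0 ≤ a * b + a ^ 2 * b + a * b ^ 2 := by positivity
  have hac : 0 ≤ a * c + a ^ 2 * c + a * b * c + a ^ 2 := by positivity
  have hj : (3 + a) * (2 * (2 + a) + b + 1) - (2 * (2 + a) + b) - 2 - c ≤ j := by linarith
  rcases le_total 1 c with hc1 | hc1
  · nlinarith [mul_le_mul_of_nonneg_left (add_le_add hij hj) hcoeff,
      mul_nonneg ha (sub_nonneg.mpr hc1)]
  · nlinarith [mul_le_mul_of_nonneg_left hj hcoeff, hc1, hab, hac]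

theorem degree_bound_lt_add_of_gap {t n i j s : ℝ} (ht : 2 ≤ t) (hi : 2 * t ≤ i) (hij : i ≤ j)
    (hgap : i + j + 2 ≤ n) (hn : 12 * t ≤ n + 8) (hs : (t + 1) * (i + 1 - s) = n) :
    j * (j + 1) + 2 * i * (n - 1 - j) <
      (n - 2 * t) * (n - 2 * t - 1) + 6 * t ^ 2 + (2 * i + j - n) * s := by
  obtain ⟨a, ha, rfl⟩ : ∃ a ≥ 0, t = 2 + a := ⟨_, sub_nonneg.mpr ht, by ring⟩
  obtain ⟨b, hb, rfl⟩ : ∃ b ≥ 0, i = 2 * (2 + a) + b := ⟨_, sub_nonneg.mpr hi, by ring⟩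
  obtain ⟨d, hd, rfl⟩ : ∃ d ≥ 0, j = 2 * (2 + a) + b + d := ⟨_, sub_nonneg.mpr hij, by ring⟩
  obtain ⟨c, hc, rfl⟩ : ∃ c ≥ 0, n = 2 * (2 + a) + b + (2 * (2 + a) + b + d) + 2 + c :=
    ⟨_, sub_nonneg.mpr hgap, by ring⟩
  have hs' : (2 + a + 1) * s = (2 + a + 1) * (2 * (2 + a) + b + 1) -
      (2 * (2 + a) + b + (2 * (2 + a) + b + d) + 2 + c) := by linarith
  have hn' : 0 ≤ 2 * b + d + c - 8 * a - 6 := by linarith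
  have hd' : 0 ≤ b * d + a * b * d + c * d + a * c * d := by positivity
  have habc : 0 ≤ a * b * c + b * c + a * c ^ 2 + a * b ^ 2 + c ^ 2 + a ^ 2 + a ^ 3 := by
    positivity
  refine lt_of_mul_lt_mul_left ?_ (show 0 ≤ 2 + a + 1 by linarith)
  rw [mul_add _ _ (_ * s), mul_left_comm _ _ s, hs']
  nlinarith [mul_nonneg hb hn', mul_nonneg hc hn', mul_nonneg ha (mul_nonneg hc hn'),
    sq_nonneg (4 * b - 7), hd', habc]

variable {V : Type*} [Fintype V] {G : SimpleGraph V} [DecidableRel G.Adj]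
  {p : ℕ → V} {N : ℕ} {t : ℝ} {u v w x y : V}

theorem IsTough.two_mul_le_degree (ht : 0 ≤ t) (hG : IsTough t G) (hxy : x ≠ y)
    (hadj : ¬ G.Adj x y) : 2 * t ≤ G.degree x := by
  classical
  have := hG.mul_card_add_two_le ht (W := ∅) (P := {x}) (S := G.neighborFinset x) (x := x) (v := y)
    (disjoint_empty_left _) (by simp) (by simp +contextual) (mem_singleton_self x) (by simp)
    (by simp [hxy.symm, hadj])
  rw [card_empty, card_neighborFinset_eq_degree] at this
  push_cast at this
  linarith

variable [DecidableEq V]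

theorem degreeCap_of_mem_commonNonNbrs (hw : w ∈ commonNonNbrs G u v) :
    degreeCap G u v w = G.degree u := by
  obtain ⟨⟨-, hwv⟩, -, hvw⟩ := mem_commonNonNbrs.mp hw
  simp [degreeCap, hwv, hvw]

namespace IsExtremalPath

variable (h : IsExtremalPath G p N u v)
include h

theorem sum_degree_add_card_mul_add_le {s l : ℝ} {T : Finset V}
    (hs : ∀ w ∈ bypassedVertices G p N, (G.degree w : ℝ) + s ≤ G.degree u)
    (hdisj : Disjoint (bypassedVertices G p N) T)
    (hT : ∑ x ∈ T, (G.degree x : ℝ) + l ≤ ∑ x ∈ T, (degreeCap G u v x : ℝ)) :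
    ∑ x, (G.degree x : ℝ) + (#(bypassedVertices G p N) * s + l) ≤
      G.degree v * (G.degree v + 1) +
        (G.degree u + #(commonNbrs G u v)) * (Fintype.card V - 1 - G.degree v) := by
  have hbypassed : ∑ x ∈ bypassedVertices G p N, ((G.degree x : ℝ) + s) ≤
      ∑ x ∈ bypassedVertices G p N, (degreeCap G u v x : ℝ) :=
    sum_le_sum fun w hw ↦ (hs w hw).trans_eq <| by
      rw [degreeCap_of_mem_commonNonNbrs (h.bypassedVertices_subset hw)]
  rw [sum_add_distrib, sum_const, nsmul_eq_mul] at hbypassed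
  refine h.sum_degree_add_le (bypassedVertices G p N ∪ T) ?_
  rw [sum_union hdisj, sum_union hdisj]
  linarith

theorem sum_degree_add_card_mul_le {s : ℝ}
    (hs : ∀ w ∈ bypassedVertices G p N, (G.degree w : ℝ) + s ≤ G.degree u) :
    ∑ x, (G.degree x : ℝ) + #(bypassedVertices G p N) * s ≤ G.degree v * (G.degree v + 1) +
      (G.degree u + #(commonNbrs G u v)) * (Fintype.card V - 1 - G.degree v) := by
  simpa using h.sum_degree_add_card_mul_add_le hs (disjoint_empty_right _) (l := 0) (by simp)

theorem sum_degree_add_mul_le {s : ℝ} (hs₀ : 0 ≤ s) (hs₁ : s ≤ G.degree u)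
    (hs : ∀ w ∈ bypassedVertices G p N, (G.degree w : ℝ) + s ≤ G.degree u) :
    ∑ x, (G.degree x : ℝ) + (2 * G.degree u + G.degree v - Fintype.card V) * s ≤
      G.degree v * (G.degree v + 1) +
        2 * G.degree u * (Fintype.card V - 1 - G.degree v) := by
  have hsum := h.sum_degree_add_card_mul_le hs
  have hlt : (G.degree u + G.degree v + 1 : ℝ) ≤ Fintype.card V := by
    exact_mod_cast h.degree_add_degree_lt
  have hbypassed : (#(commonNbrs G u v) + G.degree u + G.degree v : ℝ) ≤
      #(bypassedVertices G p N) + Fintype.card V := by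
    exact_mod_cast h.card_commonNbrs_add_le
  have hcommon : (#(commonNbrs G u v) : ℝ) ≤ G.degree u := by exact_mod_cast card_commonNbrs_le
  nlinarith [mul_le_mul_of_nonneg_right hbypassed hs₀,
    mul_nonneg (sub_nonneg.mpr hcommon) (show 0 ≤ Fintype.card V - 1 - G.degree v - s by linarith)]

theorem sum_degree_le : ∑ x, (G.degree x : ℝ) ≤ G.degree v * (G.degree v + 1) +
    2 * G.degree u * (Fintype.card V - 1 - G.degree v) := by
  simpa using h.sum_degree_add_mul_le le_rfl (Nat.cast_nonneg _) fun w hw ↦ by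
    rw [add_zero, ← degreeCap_of_mem_commonNonNbrs (h.bypassedVertices_subset hw)]
    exact_mod_cast h.degree_le_degreeCap w

theorem sum_degree_lt_of_gap (ht : 2 ≤ t) (htough : IsTough t G)
    (hn : 12 * t ≤ Fintype.card V + 8) (hgap : G.degree u + G.degree v + 2 ≤ Fintype.card V) :
    ∑ x, (G.degree x : ℝ) <
      (Fintype.card V - 2 * t) * (Fintype.card V - 2 * t - 1) + 6 * t ^ 2 := by
  have ht₀ : 0 ≤ t := by linarith
  have ht₁ : 0 < t + 1 := by linarith
  have hu := htough.two_mul_le_degree ht₀ h.ne h.not_adj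
  have huv : (G.degree u : ℝ) ≤ G.degree v := by exact_mod_cast h.degree_le
  have hgap' : (G.degree u + G.degree v + 2 : ℝ) ≤ Fintype.card V := by exact_mod_cast hgap
  rcases le_total ((t + 1) * (G.degree u + 1)) (Fintype.card V : ℝ) with hle | hle
  · exact h.sum_degree_le.trans_lt (degree_bound_lt_of_gap ht hu huv hgap' hle)
  have hs : (t + 1) * (G.degree u + 1 - (G.degree u + 1 - Fintype.card V / (t + 1))) =
      (Fintype.card V : ℝ) := by
    field_simp
    ring
  have hsum := h.sum_degree_add_mul_le (s := G.degree u + 1 - Fintype.card V / (t + 1))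
    (by rw [sub_nonneg, div_le_iff₀' ht₁]; exact hle)
    (by rw [sub_le_comm, add_sub_cancel_left, le_div_iff₀ ht₁]; linarith)
    (fun w hw ↦ by
      have := (le_div_iff₀' ht₁).mpr (h.add_one_mul_degree_add_one_le ht₀ htough hw)
      linarith)
  linarith [degree_bound_lt_add_of_gap ht hu huv hgap' hn hs]

end IsExtremalPath
end Gap

section Tight

variable {V : Type*} [Fintype V] [DecidableEq V] {G : SimpleGraph V} [DecidableRel G.Adj]
  {p : ℕ → V} {N : ℕ} {t : ℝ} {u v w x y : V}

namespace IsExtremalPath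

variable (h : IsExtremalPath G p N u v)
include h

theorem card_commonNonNbrs_add_one (htight : G.degree u + G.degree v + 1 = Fintype.card V) :
    #(commonNonNbrs G u v) + 1 = #(commonNbrs G u v) := by
  have := card_commonNonNbrs h.ne h.not_adj
  omega

theorem bypassedVertices_eq (htight : G.degree u + G.degree v + 1 = Fintype.card V) :
    bypassedVertices G p N = commonNonNbrs G u v := by
  have := h.card_commonNbrs_add_le
  have := h.card_commonNonNbrs_add_one htight
  exact eq_of_subset_of_card_le h.bypassedVertices_subset (by omega)

theorem card_biUnion_neighborFinset_le (hW : commonNonNbrs G u v ⊆ bypassedVertices G p N) :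
    #((commonNonNbrs G u v).biUnion (G.neighborFinset ·)) ≤ 2 * #(commonNonNbrs G u v) := by
  have hsub : (commonNonNbrs G u v).biUnion (G.neighborFinset ·) ⊆
      (bypassIndices G p N).image p ∪ (bypassIndices G p N).image (fun k ↦ p (k + 2)) := by
    intro y hy
    obtain ⟨w, hw, hwy⟩ := mem_biUnion.mp hy
    obtain ⟨k, hk, rfl | rfl⟩ :=
      h.exists_mem_bypassIndices_of_adj hW hw ((G.mem_neighborFinset w y).mp hwy)
    · exact mem_union_left _ (mem_image_of_mem _ hk)
    · exact mem_union_right _ (mem_image_of_mem (fun k ↦ p (k + 2)) hk)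
  have hcard : #(bypassIndices G p N) ≤ #(commonNonNbrs G u v) :=
    h.card_bypassedVertices ▸ card_le_card h.bypassedVertices_subset
  have := (card_le_card hsub).trans (card_union_le _ _)
  have := card_image_le (s := bypassIndices G p N) (f := p)
  have := card_image_le (s := bypassIndices G p N) (f := fun k ↦ p (k + 2))
  omega

theorem commonNonNbrs_eq_empty (ht : 2 ≤ t) (htough : IsTough t G)
    (hW : commonNonNbrs G u v ⊆ bypassedVertices G p N) : commonNonNbrs G u v = ∅ := by
  by_contra! hne
  obtain ⟨w, hw⟩ := hne
  set S := (commonNonNbrs G u v).biUnion (G.neighborFinset ·)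
  have mem_S {y z} (hy : y ∈ commonNonNbrs G u v) (hyz : G.Adj y z) : z ∈ S :=
    mem_biUnion.mpr ⟨y, hy, (G.mem_neighborFinset y z).mpr hyz⟩
  have adj_of_mem_S {z} (hz : z ∈ S) : G.Adj u z ∨ G.Adj v z := by
    obtain ⟨y, hy, hyz⟩ := mem_biUnion.mp hz
    exact h.adj_or_adj_of_adj hW hy ((G.mem_neighborFinset y z).mp hyz)
  have hdisj {z} (hz : z ∈ commonNonNbrs G u v) : z ∉ S := fun hzS ↦
    (adj_of_mem_S hzS).elim (mem_commonNonNbrs.mp hz).2.1 (mem_commonNonNbrs.mp hz).2.2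
  have huW : u ∉ commonNonNbrs G u v := fun hu ↦ (mem_commonNonNbrs.mp hu).1.1 rfl
  have huS : u ∉ S := fun hu ↦
    (adj_of_mem_S hu).elim (G.irrefl (v := u)) (h.not_adj ∘ SimpleGraph.Adj.symm)
  have hcut := htough.mul_card_add_two_le (by linarith) (W := (commonNonNbrs G u v).erase w)
    (P := {w}) (S := S) (x := w) (v := u)
    (Finset.disjoint_left.mpr fun z hz ↦ hdisj (mem_of_mem_erase hz))
    (fun y hy z hyz ↦ mem_S (mem_of_mem_erase hy) hyz)
    (fun y hy z hyz ↦ mem_union_left _ (mem_S (mem_singleton.mp hy ▸ hw) hyz))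
    (mem_singleton_self w) (by simp [hdisj hw])
    (by simp [huW, huS, ne_of_mem_of_not_mem hw huW |>.symm])
  have hle : (#S : ℝ) ≤ 2 * #(commonNonNbrs G u v) := by
    exact_mod_cast h.card_biUnion_neighborFinset_le hW
  rw [cast_card_erase_of_mem hw] at hcut
  nlinarith [show (0 : ℝ) ≤ #(commonNonNbrs G u v) from Nat.cast_nonneg _]

theorem sum_degree_lt_of_tight_of_two_le (ht : 2 ≤ t) (htough : IsTough t G)
    (htight : G.degree u + G.degree v + 1 = Fintype.card V) :
    ∑ x, (G.degree x : ℝ) <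
      (Fintype.card V - 2 * t) * (Fintype.card V - 2 * t - 1) + 6 * t ^ 2 := by
  have hu := htough.two_mul_le_degree (by linarith) h.ne h.not_adj
  have huv : (G.degree u : ℝ) ≤ G.degree v := by exact_mod_cast h.degree_le
  have hcommon : #(commonNbrs G u v) = 1 := by
    rw [← h.card_commonNonNbrs_add_one htight,
      h.commonNonNbrs_eq_empty ht htough (h.bypassedVertices_eq htight).ge, card_empty]
  have hsum := h.sum_degree_add_le ∅ (l := 0) (by simp)
  rw [hcommon, ← htight] at hsum
  rw [← htight]
  push_cast at hsum ⊢
  nlinarith [mul_nonneg (sub_nonneg.mpr hu) (sub_nonneg.mpr (hu.trans huv))]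

end IsExtremalPath
end Tight

section OneTough

variable {V : Type*} [Fintype V] {G : SimpleGraph V} [DecidableRel G.Adj]
  {p : ℕ → V} {N : ℕ} {u v w x y : V}

theorem IsTough.two_le_degree (htough : IsTough 1 G) (hxy : x ≠ y) (hadj : ¬ G.Adj x y) :
    2 ≤ G.degree x := by
  exact_mod_cast (mul_one (2 : ℝ)) ▸ htough.two_mul_le_degree zero_le_one hxy hadj

variable [DecidableEq V]

theorem degreeCap_of_mem_commonNbrs (hx : x ∈ commonNbrs G u v) :
    degreeCap G u v x = Fintype.card V - 1 := by
  obtain ⟨hux, hvx⟩ := mem_commonNbrs.mp hx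
  simp [degreeCap, hux, hvx]

theorem adj_iff_mem_commonNbrs (hcard : #(commonNbrs G u v) = G.degree u) :
    G.Adj u x ↔ x ∈ commonNbrs G u v := by
  rw [← G.mem_neighborFinset, commonNbrs, eq_of_subset_of_card_le inter_subset_left hcard.ge]

theorem disjoint_commonNonNbrs_commonNbrs :
    Disjoint (commonNonNbrs G u v) (commonNbrs G u v) :=
  Finset.disjoint_left.mpr fun _ hx hx' ↦
    (mem_commonNonNbrs.mp hx).2.1 (mem_commonNbrs.mp hx').1

namespace IsExtremalPath

variable (h : IsExtremalPath G p N u v)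
include h

theorem exists_adj_notMem_commonNbrs (htough : IsTough 1 G) {P : Finset V} (hu : u ∈ P)
    (hv : v ∉ P) (hP : ∀ y ∈ P, ∀ z, G.Adj y z → z ∈ commonNbrs G u v ∪ P) :
    ∃ w ∈ commonNonNbrs G u v, ∃ y ∉ commonNbrs G u v, G.Adj w y := by
  by_contra! hW
  have hcut := htough.mul_card_add_two_le zero_le_one (x := u) (v := v)
    disjoint_commonNonNbrs_commonNbrs (fun w hw y hwy ↦ by_contra fun hy ↦ hW w hw y hy hwy)
    hP hu (by simp [mem_commonNonNbrs, mem_commonNbrs])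
    (by simp [mem_commonNonNbrs, mem_commonNbrs, hv])
  have hcut : #(commonNonNbrs G u v) + 2 ≤ #(commonNbrs G u v) := by
    exact_mod_cast (one_mul (_ : ℝ)) ▸ hcut
  have := card_commonNonNbrs h.ne h.not_adj
  have := h.degree_add_degree_lt
  omega

theorem exists_adj_notMem_commonNbrs_of_card_eq (htough : IsTough 1 G)
    (hcard : #(commonNbrs G u v) = G.degree u) :
    ∃ w ∈ commonNonNbrs G u v, ∃ y ∉ commonNbrs G u v, G.Adj w y :=
  h.exists_adj_notMem_commonNbrs htough (mem_singleton_self u)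
    (fun hv ↦ h.ne (mem_singleton.mp hv).symm) fun _ hy _ hyz ↦
      mem_union_left _ ((adj_iff_mem_commonNbrs hcard).mp (mem_singleton.mp hy ▸ hyz))

theorem degree_le_of_mem_commonNonNbrs (hw : w ∈ commonNonNbrs G u v) :
    G.degree w ≤ G.degree u :=
  degreeCap_of_mem_commonNonNbrs hw ▸ h.degree_le_degreeCap w

theorem sum_degree_add_degree_le_of_card_eq (htough : IsTough 1 G)
    (hcard : #(commonNbrs G u v) = G.degree u) :
    ∑ x, (G.degree x : ℝ) + G.degree u ≤ G.degree v * (G.degree v + 1) +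
      2 * G.degree u * (Fintype.card V - 1 - G.degree v) := by
  obtain ⟨w, hw, y, hy, hwy⟩ := h.exists_adj_notMem_commonNbrs_of_card_eq htough hcard
  set X := commonNbrs G u v \ G.neighborFinset w
  have hX_card : G.degree u + 1 ≤ #X + G.degree w := by
    have hlt := card_lt_card <| (ssubset_iff_of_subset
      (inter_subset_right : commonNbrs G u v ∩ G.neighborFinset w ⊆ _)).mpr
        ⟨y, (G.mem_neighborFinset w y).mpr hwy, fun hy' ↦ hy (mem_of_mem_inter_left hy')⟩
    have : #X + _ = _ := card_sdiff_add_card_inter (commonNbrs G u v) (G.neighborFinset w)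
    rw [card_neighborFinset_eq_degree] at hlt
    omega
  have hX_degree : ∀ x ∈ X, G.degree x + G.degree w ≤ degreeCap G u v x := fun x hx ↦ by
    obtain ⟨hxC, hwx⟩ := mem_sdiff.mp hx
    have hne : x ≠ w := fun hxw ↦
      Finset.disjoint_left.mp disjoint_commonNonNbrs_commonNbrs hw (hxw ▸ hxC)
    have := h.degree_add_degree_le x w hne (by rwa [G.adj_comm, ← G.mem_neighborFinset])
    have := h.degree_add_degree_lt
    rw [degreeCap_of_mem_commonNbrs hxC]
    omega
  have hsum : ∑ x ∈ X, (G.degree x : ℝ) + #X * G.degree w ≤ ∑ x ∈ X, (degreeCap G u v x : ℝ) := by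
    rw [← nsmul_eq_mul, ← sum_const, ← sum_add_distrib]
    exact sum_le_sum fun x hx ↦ by exact_mod_cast hX_degree x hx
  have hpos : (1 : ℝ) ≤ G.degree w := by
    exact_mod_cast (G.degree_pos_iff_exists_adj w).mpr ⟨y, hwy⟩
  have hle : (G.degree w : ℝ) ≤ G.degree u := by
    exact_mod_cast h.degree_le_of_mem_commonNonNbrs hw
  have hX_card : (G.degree u + 1 : ℝ) ≤ #X + G.degree w := by exact_mod_cast hX_card
  have hloss : (G.degree u : ℝ) ≤ #X * G.degree w := by
    nlinarith [mul_nonneg (sub_nonneg.mpr hpos) (sub_nonneg.mpr hle)]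
  have := h.sum_degree_add_le X (l := #X * G.degree w) hsum
  rw [hcard] at this
  linarith

theorem sum_degree_add_degree_le (htough : IsTough 1 G) :
    ∑ x, (G.degree x : ℝ) + G.degree u ≤ G.degree v * (G.degree v + 1) +
      2 * G.degree u * (Fintype.card V - 1 - G.degree v) := by
  rcases (card_commonNbrs_le (G := G) (u := u) (v := v)).eq_or_lt with hcard | hcard
  · exact h.sum_degree_add_degree_le_of_card_eq htough hcard
  have hsum := h.sum_degree_add_le ∅ (l := 0) (by simp)
  have hcard : (#(commonNbrs G u v) + 1 : ℝ) ≤ G.degree u := by exact_mod_cast hcard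
  have hlt : (G.degree u + G.degree v + 1 : ℝ) ≤ Fintype.card V := by
    exact_mod_cast h.degree_add_degree_lt
  nlinarith [mul_nonneg (sub_nonneg.mpr hcard)
    (show (0 : ℝ) ≤ Fintype.card V - 1 - G.degree v by linarith)]

theorem sum_degree_lt_of_gap_of_isTough_one (htough : IsTough 1 G)
    (hgap : G.degree u + G.degree v + 2 ≤ Fintype.card V) :
    ∑ x, (G.degree x : ℝ) <
      (Fintype.card V - 2) * (Fintype.card V - 3) + 6 := by
  have hsum := h.sum_degree_add_degree_le htough
  have hu : (2 : ℝ) ≤ G.degree u := by exact_mod_cast htough.two_le_degree h.ne h.not_adj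
  have huv : (G.degree u : ℝ) ≤ G.degree v := by exact_mod_cast h.degree_le
  have hgap : (G.degree u + G.degree v + 2 : ℝ) ≤ Fintype.card V := by exact_mod_cast hgap
  nlinarith [mul_nonneg (sub_nonneg.mpr hu) (sub_nonneg.mpr huv),
    mul_nonneg (sub_nonneg.mpr huv) (sub_nonneg.mpr hgap),
    sq_nonneg (Fintype.card V - G.degree u - G.degree v - 2 : ℝ)]

end IsExtremalPath
end OneTough

section OneToughTight

variable {V : Type*} [Fintype V] {G : SimpleGraph V} [DecidableRel G.Adj]
  {p : ℕ → V} {N : ℕ} {u v w x y : V}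

theorem exists_not_adj_of_degree_add_two_lt (hx : G.degree x + 2 < Fintype.card V) (w : V) :
    ∃ y, y ≠ x ∧ y ≠ w ∧ ¬ G.Adj x y := by
  classical
  have hcard : #({x, w} ∪ G.neighborFinset x) < #(univ : Finset V) := by
    have := (card_union_le {x, w} (G.neighborFinset x)).trans
      (Nat.add_le_add_right card_le_two _)
    rw [card_neighborFinset_eq_degree] at this
    rw [card_univ]
    omega
  obtain ⟨y, -, hy⟩ := exists_mem_notMem_of_card_lt_card hcard
  refine ⟨y, ?_⟩
  simpa [and_assoc] using hy

variable [DecidableEq V]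

namespace IsExtremalPath

variable (h : IsExtremalPath G p N u v)
include h

theorem exists_adj_last (htough : IsTough 1 G)
    (htight : G.degree u + G.degree v + 1 = Fintype.card V)
    (hcard : #(commonNbrs G u v) = G.degree u) :
    ∃ w ∈ commonNonNbrs G u v, ∃ y ∉ commonNbrs G u v, G.Adj w y ∧ G.Adj v y := by
  obtain ⟨w, hw, y, hy, hwy⟩ := h.exists_adj_notMem_commonNbrs_of_card_eq htough hcard
  have hadj := h.adj_or_adj_of_adj (h.bypassedVertices_eq htight).ge hw hwy
  exact ⟨w, hw, y, hy, hwy, hadj.resolve_left fun huy ↦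
    hy ((adj_iff_mem_commonNbrs hcard).mp huy)⟩

/-- The case `deg u = 2`: the only common non-neighbour `w` has degree `2` and misses a common
neighbour `s`, and `s` has a further non-neighbour. -/
theorem sum_degree_add_three_le (htough : IsTough 1 G) (hn : 7 ≤ Fintype.card V)
    (htight : G.degree u + G.degree v + 1 = Fintype.card V) (hu : G.degree u = 2)
    (hcard : #(commonNbrs G u v) = 2) :
    ∑ x, (G.degree x : ℝ) + 3 ≤ G.degree v * (G.degree v + 1) +
      (G.degree u + #(commonNbrs G u v)) * (Fintype.card V - 1 - G.degree v) := by
  obtain ⟨w, hw, y, hy, hwy, -⟩ := h.exists_adj_last htough htight (hcard.trans hu.symm)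
  obtain ⟨⟨hwu, -⟩, huw, -⟩ := mem_commonNonNbrs.mp hw
  have hdw := htough.two_le_degree hwu (huw ∘ SimpleGraph.Adj.symm)
  have hW : ∀ x ∈ commonNonNbrs G u v, x = w := fun x hx ↦ by
    have := h.card_commonNonNbrs_add_one htight
    exact card_le_one.mp (by omega) x hx w hw
  obtain ⟨s, hs, hws⟩ : ∃ s ∈ commonNbrs G u v, ¬ G.Adj w s := by
    by_contra! hC
    have hsub : insert y (commonNbrs G u v) ⊆ G.neighborFinset w :=
      insert_subset (by simpa using hwy) fun s hs ↦ by simpa using hC s hs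
    have := card_le_card hsub
    rw [card_insert_of_notMem hy, card_neighborFinset_eq_degree] at this
    have := h.degree_le_of_mem_commonNonNbrs hw
    omega
  have hsw : s ≠ w := fun hsw ↦
    Finset.disjoint_left.mp disjoint_commonNonNbrs_commonNbrs hw (hsw ▸ hs)
  have hds := h.degree_add_degree_le s w hsw (hws ∘ SimpleGraph.Adj.symm)
  obtain ⟨x, hxs, hxw, hsx⟩ := exists_not_adj_of_degree_add_two_lt (G := G) (x := s) (by omega) w
  have hdx := h.degree_add_degree_le s x hxs.symm hsx
  have hvx : G.degree v ≤ degreeCap G u v x := by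
    have := mt (hW x) hxw
    have := h.degree_le
    have := G.degree_lt_card_verts v
    have hus := (mem_commonNbrs.mp hs).1
    have hxu : x ≠ u := by rintro rfl; exact hsx hus.symm
    have := adj_iff_mem_commonNbrs (x := x) (hcard.trans hu.symm)
    rw [degreeCap]
    grind [mem_commonNonNbrs, mem_commonNbrs]
  refine h.sum_degree_add_le {s, x} ?_
  rw [sum_pair hxs.symm, sum_pair hxs.symm, degreeCap_of_mem_commonNbrs hs]
  norm_cast
  omega

theorem sum_degree_lt_of_tight_of_card_eq (htough : IsTough 1 G) (hn : 7 ≤ Fintype.card V)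
    (htight : G.degree u + G.degree v + 1 = Fintype.card V)
    (hcard : #(commonNbrs G u v) = G.degree u) :
    ∑ x, (G.degree x : ℝ) < (Fintype.card V - 2) * (Fintype.card V - 3) + 6 := by
  have hu := htough.two_le_degree h.ne h.not_adj
  rcases hu.eq_or_lt with hu | hu
  · have hsum := h.sum_degree_add_three_le htough hn htight hu.symm (hcard.trans hu.symm)
    rw [hcard, ← hu, ← htight, ← hu] at hsum
    rw [← htight, ← hu]
    push_cast at hsum ⊢
    nlinarith
  · have hlt : (G.degree u + 1 : ℝ) ≤ G.degree v := by
      obtain ⟨w, -, y, hy, -, hvy⟩ := h.exists_adj_last htough htight hcard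
      have := card_lt_card <| (ssubset_iff_of_subset
        (inter_subset_right : commonNbrs G u v ⊆ G.neighborFinset v)).mpr
          ⟨y, (G.mem_neighborFinset v y).mpr hvy, hy⟩
      rw [← commonNbrs, hcard, card_neighborFinset_eq_degree] at this
      exact_mod_cast this
    have hsum := h.sum_degree_add_degree_le htough
    have hu : (3 : ℝ) ≤ G.degree u := by exact_mod_cast hu
    rw [← htight] at hsum ⊢
    push_cast at hsum ⊢
    nlinarith [mul_nonneg (sub_nonneg.mpr hu) (sub_nonneg.mpr hlt)]

theorem degree_le_card_commonNbrs
    (htight : G.degree u + G.degree v + 1 = Fintype.card V) (hw : w ∈ bypassedVertices G p N) :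
    G.degree w ≤ #(commonNbrs G u v) :=
  (h.degree_le_of_mem_bypassedVertices hw).trans (h.card_commonNonNbrs_add_one htight).le

theorem exists_mem_commonNbrs_not_adj (htough : IsTough 1 G)
    (htight : G.degree u + G.degree v + 1 = Fintype.card V)
    (hcard : #(commonNbrs G u v) + 1 = G.degree u) :
    ∃ s ∈ commonNbrs G u v, ∃ x, s ≠ x ∧ ¬ G.Adj s x := by
  by_contra! huniv
  have hsub {x : V} (hx : x ∉ commonNbrs G u v) : commonNbrs G u v ⊆ G.neighborFinset x :=
    fun s hs ↦ (G.mem_neighborFinset x s).mpr (huniv s hs x (fun hsx ↦ hx (hsx ▸ hs))).symm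
  have hu : u ∉ commonNbrs G u v := fun hu ↦ G.irrefl (mem_commonNbrs.mp hu).1
  obtain ⟨a, ha, hNu⟩ : ∃ a ∉ commonNbrs G u v,
      insert a (commonNbrs G u v) = G.neighborFinset u := exists_eq_insert_iff.mpr
    ⟨inter_subset_left, hcard.trans (G.card_neighborFinset_eq_degree u).symm⟩
  have hua : G.Adj u a := (G.mem_neighborFinset u a).mp (hNu ▸ mem_insert_self a _)
  have hva : ¬ G.Adj v a := fun hva ↦ ha (mem_commonNbrs.mpr ⟨hua, hva⟩)
  have hav : a ≠ v := fun hav ↦ h.not_adj (hav ▸ hua)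
  have hNa : insert u (commonNbrs G u v) = G.neighborFinset a := by
    have := h.degree_le_degreeCap a
    simp only [degreeCap, hva, hav, if_false] at this
    refine eq_of_subset_of_card_le (insert_subset (by simpa using hua.symm) (hsub ha)) ?_
    rw [card_insert_of_notMem hu, hcard, card_neighborFinset_eq_degree]
    exact this
  obtain ⟨w, hw, y, hy, hwy⟩ := h.exists_adj_notMem_commonNbrs htough (P := {u, a})
    (mem_insert_self u _) (by simp [h.ne.symm, hav.symm]) fun x hx z hxz ↦ by
      rw [← mem_neighborFinset] at hxz
      grind
  have hle := card_le_card <| insert_subset ((G.mem_neighborFinset w y).mpr hwy) <| hsub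
    (Finset.disjoint_left.mp disjoint_commonNonNbrs_commonNbrs hw)
  rw [card_insert_of_notMem hy, card_neighborFinset_eq_degree] at hle
  exact (Nat.lt_of_succ_le hle).not_ge
    (h.degree_le_card_commonNbrs htight (h.bypassedVertices_eq htight ▸ hw))

theorem degree_add_sub_le_of_mem_bypassedVertices
    (htight : G.degree u + G.degree v + 1 = Fintype.card V) (hw : w ∈ bypassedVertices G p N) :
    (G.degree w : ℝ) + (G.degree u - #(commonNbrs G u v)) ≤ G.degree u := by
  have : (G.degree w : ℝ) ≤ #(commonNbrs G u v) := by
    exact_mod_cast h.degree_le_card_commonNbrs htight hw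
  linarith

theorem sum_degree_lt_of_tight_of_card_add_one_eq (htough : IsTough 1 G)
    (htight : G.degree u + G.degree v + 1 = Fintype.card V)
    (hcard : #(commonNbrs G u v) + 1 = G.degree u) :
    ∑ x, (G.degree x : ℝ) < (Fintype.card V - 2) * (Fintype.card V - 3) + 6 := by
  obtain ⟨s, hs, x, hsx, hadj⟩ := h.exists_mem_commonNbrs_not_adj htough htight hcard
  have hdisj : Disjoint (bypassedVertices G p N) {s} := by
    rw [h.bypassedVertices_eq htight, disjoint_singleton_right]
    exact Finset.disjoint_right.mp disjoint_commonNonNbrs_commonNbrs hs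
  have hds : G.degree s + 1 ≤ degreeCap G u v s := by
    rw [degreeCap_of_mem_commonNbrs hs]
    exact (G.degree_lt_card_sub_one s).mpr fun hall ↦ hadj (hall hsx)
  have hsum := h.sum_degree_add_card_mul_add_le
    (fun w ↦ h.degree_add_sub_le_of_mem_bypassedVertices htight) hdisj (l := 1)
    (by rw [sum_singleton, sum_singleton]; exact_mod_cast hds)
  have hbypassed : (#(bypassedVertices G p N) + 1 : ℝ) = #(commonNbrs G u v) := by
    exact_mod_cast h.bypassedVertices_eq htight ▸ h.card_commonNonNbrs_add_one htight
  have hcard : (#(commonNbrs G u v) : ℝ) = G.degree u - 1 := by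
    rw [← hcard, Nat.cast_add_one, add_sub_cancel_right]
  have hu : (2 : ℝ) ≤ G.degree u := by exact_mod_cast htough.two_le_degree h.ne h.not_adj
  have huv : (G.degree u : ℝ) ≤ G.degree v := by exact_mod_cast h.degree_le
  rw [eq_sub_of_add_eq hbypassed, hcard, ← htight] at hsum
  rw [← htight]
  push_cast at hsum ⊢
  nlinarith [mul_nonneg (sub_nonneg.mpr hu) (sub_nonneg.mpr huv),
    sq_nonneg (2 * G.degree u - 5 : ℝ)]

theorem sum_degree_lt_of_tight_of_card_add_two_le
    (htight : G.degree u + G.degree v + 1 = Fintype.card V)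
    (hcard : #(commonNbrs G u v) + 2 ≤ G.degree u) :
    ∑ x, (G.degree x : ℝ) < (Fintype.card V - 2) * (Fintype.card V - 3) + 6 := by
  have hsum := h.sum_degree_add_card_mul_le fun w ↦
    h.degree_add_sub_le_of_mem_bypassedVertices htight
  have hbypassed : (#(bypassedVertices G p N) + 1 : ℝ) = #(commonNbrs G u v) := by
    exact_mod_cast h.bypassedVertices_eq htight ▸ h.card_commonNonNbrs_add_one htight
  have hcard : (#(commonNbrs G u v) + 2 : ℝ) ≤ G.degree u := by exact_mod_cast hcard
  have hpos : (0 : ℝ) ≤ #(bypassedVertices G p N) := Nat.cast_nonneg _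
  have huv : (G.degree u : ℝ) ≤ G.degree v := by exact_mod_cast h.degree_le
  rw [← hbypassed, ← htight] at hsum
  rw [← hbypassed] at hcard
  rw [← htight]
  push_cast at hsum ⊢
  nlinarith [mul_nonneg (sub_nonneg.mpr hcard) (sub_nonneg.mpr huv)]

end IsExtremalPath
end OneToughTight

section Hamiltonicity

variable {V : Type*} [Fintype V] {G : SimpleGraph V} [DecidableRel G.Adj] {t : ℕ}

theorem exists_degree_add_degree_max (hG : G ≠ ⊤) :
    ∃ u v, u ≠ v ∧ ¬ G.Adj u v ∧ G.degree u ≤ G.degree v ∧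
      ∀ x y, x ≠ y → ¬ G.Adj x y → G.degree x + G.degree y ≤ G.degree u + G.degree v := by
  classical
  obtain ⟨a, b, hab, hadj⟩ := ne_top_iff_exists_not_adj.mp hG
  obtain ⟨⟨u, v⟩, huv, hmax⟩ := exists_max_image {q : V × V | q.1 ≠ q.2 ∧ ¬ G.Adj q.1 q.2}
    (fun q ↦ G.degree q.1 + G.degree q.2) ⟨(a, b), by simp [hab, hadj]⟩
  simp only [mem_filter, mem_univ, true_and, Prod.forall, and_imp] at huv hmax
  rcases le_total (G.degree u) (G.degree v) with hle | hle
  · exact ⟨u, v, huv.1, huv.2, hle, hmax⟩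
  · exact ⟨v, u, huv.1.symm, huv.2 ∘ SimpleGraph.Adj.symm, hle, fun x y hxy hadj ↦
      (hmax x y hxy hadj).trans_eq (add_comm _ _)⟩

theorem card_sq_lt_four_mul_card_edgeFinset (ht : 1 ≤ t) (h7 : 7 ≤ Fintype.card V)
    (hn : 12 * t ≤ Fintype.card V + 8)
    (hm : (Fintype.card V - 2 * t).choose 2 + 3 * t ^ 2 ≤ #G.edgeFinset) :
    Fintype.card V ^ 2 < 4 * #G.edgeFinset := by
  have hm : ((Fintype.card V - 2 * t : ℕ).choose 2 + 3 * t ^ 2 : ℝ) ≤ #G.edgeFinset := by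
    exact_mod_cast hm
  rw [Nat.cast_choose_two, Nat.cast_sub (by omega)] at hm
  push_cast at hm
  have hgap : (4 * t + 3 : ℝ) ≤ Fintype.card V := by
    exact_mod_cast (by omega : 4 * t + 3 ≤ Fintype.card V)
  have ht : (1 : ℝ) ≤ t := by exact_mod_cast ht
  suffices (Fintype.card V ^ 2 : ℝ) < 4 * #G.edgeFinset by exact_mod_cast this
  nlinarith

variable [DecidableEq V]

theorem isHamiltonian_top (hV : 3 ≤ Fintype.card V) : (⊤ : SimpleGraph V).IsHamiltonian := by
  obtain ⟨N, hN⟩ : ∃ N, Fintype.card V = N + 1 := ⟨Fintype.card V - 1, by omega⟩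
  let e : Fin (N + 1) ≃ V := (Fintype.equivFinOfCardEq hN).symm
  let p : ℕ → V := fun k ↦ e (Fin.ofNat (N + 1) k)
  have hinj : Set.InjOn p (Set.Iic N) := fun i hi j hj hij ↦ by
    simpa [Fin.ext_iff, Nat.mod_eq_of_lt (Nat.lt_succ_of_le hi),
      Nat.mod_eq_of_lt (Nat.lt_succ_of_le hj)] using e.injective hij
  have hpath : IsSpanningPath ⊤ p N :=
    { adj := fun k hk ↦ hinj.ne (Set.mem_Iic.mpr hk.le) (Set.mem_Iic.mpr hk) k.lt_succ_self.ne
      injOn := hinj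
      surj := fun x ↦ ⟨e.symm x, Nat.le_of_lt_succ (e.symm x).isLt, by simp [p]⟩ }
  by_contra hnot
  exact hpath.not_adj (by omega) hnot <|
    hinj.ne (Set.mem_Iic.mpr N.zero_le) (Set.mem_Iic.mpr le_rfl) (by omega)

theorem exists_isExtremalPath (hV : 3 ≤ Fintype.card V)
    (hG : Maximal (fun H : SimpleGraph V ↦ ¬ H.IsHamiltonian) G) :
    ∃ p N u v, IsExtremalPath G p N u v := by
  obtain ⟨u, v, huv, hadj, hle, hmax⟩ := exists_degree_add_degree_max (G := G) <| by
    rintro rfl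
    exact hG.prop (isHamiltonian_top hV)
  have hedge : (G ⊔ edge u v).IsHamiltonian := by
    by_contra hcon
    exact hadj (hG.le_of_ge hcon le_sup_left (by simp [edge_adj, huv]))
  obtain ⟨N, p, hN, hp, h₀, h₁⟩ := exists_isSpanningPath_of_isHamiltonian_sup_edge huv hG.prop hedge
  exact ⟨p, N, u, v, hp, hN, h₀, h₁, hG.prop, hle, hmax⟩

theorem IsExtremalPath.sum_degree_lt {p : ℕ → V} {N : ℕ} {u v : V}
    (h : IsExtremalPath G p N u v) (ht : 1 ≤ t) (h7 : 7 ≤ Fintype.card V)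
    (hn : 12 * t ≤ Fintype.card V + 8) (htough : IsTough (t : ℝ) G) :
    ∑ x, (G.degree x : ℝ) <
      (Fintype.card V - 2 * t) * (Fintype.card V - 2 * t - 1) + 6 * t ^ 2 := by
  have htight_or_gap : G.degree u + G.degree v + 1 = Fintype.card V ∨
      G.degree u + G.degree v + 2 ≤ Fintype.card V := by
    have := h.degree_add_degree_lt
    omega
  rcases ht.eq_or_lt with rfl | ht
  · rw [Nat.cast_one] at htough
    rw [show ((Fintype.card V : ℝ) - 2 * (1 : ℕ)) * (Fintype.card V - 2 * (1 : ℕ) - 1) +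
      6 * (1 : ℕ) ^ 2 = (Fintype.card V - 2) * (Fintype.card V - 3) + 6 by push_cast; ring]
    rcases htight_or_gap with htight | hgap
    · obtain hcard | hcard | hcard : #(commonNbrs G u v) = G.degree u ∨
          #(commonNbrs G u v) + 1 = G.degree u ∨ #(commonNbrs G u v) + 2 ≤ G.degree u := by
        have := card_commonNbrs_le (G := G) (u := u) (v := v)
        omega
      · exact h.sum_degree_lt_of_tight_of_card_eq htough h7 htight hcard
      · exact h.sum_degree_lt_of_tight_of_card_add_one_eq htough htight hcard
      · exact h.sum_degree_lt_of_tight_of_card_add_two_le htight hcard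
    · exact h.sum_degree_lt_of_gap_of_isTough_one htough hgap
  · have ht : (2 : ℝ) ≤ t := by exact_mod_cast ht
    rcases htight_or_gap with htight | hgap
    · exact h.sum_degree_lt_of_tight_of_two_le ht htough htight
    · exact h.sum_degree_lt_of_gap ht htough (by exact_mod_cast hn) hgap

theorem IsTough.isHamiltonian (ht : 1 ≤ t) (h7 : 7 ≤ Fintype.card V)
    (hn : 12 * t ≤ Fintype.card V + 8) (htough : IsTough (t : ℝ) G)
    (hm : (Fintype.card V - 2 * t).choose 2 + 3 * t ^ 2 ≤ #G.edgeFinset) : G.IsHamiltonian := by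
  classical
  by_contra hG
  obtain ⟨H, hGH, hH⟩ := (Set.toFinite {H : SimpleGraph V | ¬ H.IsHamiltonian}).exists_le_maximal hG
  obtain ⟨p, N, u, v, h⟩ := exists_isExtremalPath (by omega) hH
  have hlt := h.sum_degree_lt ht h7 hn (htough.mono t.cast_nonneg hGH)
  have hle : ((Fintype.card V - 2 * t : ℕ).choose 2 + 3 * t ^ 2 : ℝ) ≤ #H.edgeFinset := by
    exact_mod_cast hm.trans (card_le_card (edgeFinset_mono hGH))
  have hsum : ∑ x, (H.degree x : ℝ) = 2 * #H.edgeFinset := by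
    exact_mod_cast H.sum_degrees_eq_twice_card_edges
  rw [Nat.cast_choose_two, Nat.cast_sub (by omega)] at hle
  push_cast at hle
  linarith

end Hamiltonicity

theorem tough_pancyclic_or_bipartite_general {V : Type*} [Fintype V] (G : SimpleGraph V)
    [DecidableRel G.Adj] (t : ℕ) (ht : 1 ≤ t) (h7 : 7 ≤ Fintype.card V)
    (hn : 12 * t ≤ Fintype.card V + 8) (htough : IsTough (t : ℝ) G)
    (hm : (Fintype.card V - 2 * t).choose 2 + 3 * t ^ 2 ≤ #G.edgeFinset) : Pancyclic G := by
  classical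
  exact pancyclic_of_isHamiltonian_of_sq_lt (by omega) (htough.isHamiltonian ht h7 hn hm)
    (card_sq_lt_four_mul_card_edgeFinset ht h7 hn hm)

/-- Theorem 2.1: a connected `t`-tough graph (`t ∈ {1,2,3}`) of order `n` and
size `m ≥ C(n − 2t, 2) + 3t²` is pancyclic or bipartite, provided
`n ≥ 7` (t = 1), `n ≥ 16` (t = 2), or `n ≥ 28` (t = 3). -/
theorem tough_pancyclic_or_bipartite {n : ℕ} (G : SimpleGraph (Fin n))
    [DecidableRel G.Adj] (t : ℕ)
    (ht : (t = 1 ∧ 7 ≤ n) ∨ (t = 2 ∧ 16 ≤ n) ∨ (t = 3 ∧ 28 ≤ n))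
    (hconn : G.Connected) (htough : IsTough (t : ℝ) G)
    (hm : (n - 2 * t).choose 2 + 3 * t ^ 2 ≤ G.edgeFinset.card) :
    Pancyclic G ∨ G.Colorable 2 := by
  have hcard := Fintype.card_fin n
  exact .inl <| tough_pancyclic_or_bipartite_general G t (by omega) (by omega) (by omega) htough
    (by rwa [hcard])
end
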